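/- arXiv:1901.05889 — 4 statements merged into one kernel-verified Lean document; each statement's English description precedes it below -/
import Mathlib

section
/- Let $a(q) = \sum_{m,n=-\infty}^{\infty} q^{m^2+mn+n^2}$ for $|q|<1$ (with $0<q<1$ real). Then $a(q) = 1 + 6\sum_{n=1}^{\infty}\left(\frac{q^{3n-2}}{1-q^{3n-2}} - \frac{q^{3n-1}}{1-q^{3n-1}}\right)$. -/
/-!
Both sides are generating series, so the theorem amounts to the classical formula
`r(n) = 6 ∑_{d ∣ n} χ(d)` for `n ≥ 1`, where `r(n)` counts the Eisenstein integers of norm `n` and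
`χ` is the non-principal character modulo `3`.

Both `r` and the divisor sum `f(n) = ∑_{d ∣ n} χ(d)` satisfy, for every prime `p`, the recurrence
`g(p n) + χ(p) g(n / p) = (1 + χ(p)) g(n)`, with `g(n / p)` read as `0` if `p ∤ n`; since
`r(1) = 6 = 6 f(1)`, strong induction on `n` gives the formula (`N_eq`).

* For `f` (`F_rec`) this is inclusion–exclusion on the divisors of `p n`.
* For `r` (`N_rec`) it depends on how `p` factors. If `p ≡ 1 mod 3`, then `p` is the norm of some
  `w` (Thue's lemma, `exists_norm`); an element of norm `p n` is a multiple of `w` or of its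
  conjugate, and of both exactly when it is a multiple of `p`, so inclusion–exclusion applies again
  (`N_rec_split`). If `p ≡ 2 mod 3`, an element of norm divisible by `p` is itself divisible by `p`
  (`N_rec_inert`). If `p = 3`, it is divisible by `1 + τ`, of norm `3` (`N_rec_three`).

On the analytic side, absolute convergence permits collecting the theta series by norm
(`hasSum_theta`), and the double series `∑ χ(d) q ^ (d e)` either by `n = d e`
(`hasSum_lambert_left`) or by `d` and then by residues modulo `3` (`hasSum_lambert_right`,
`hasSum_lambert_three`).
-/

/-! ### Eisenstein integers and the divisor sum -/

/-- The norm form `x ^ 2 + x y + y ^ 2` of the Eisenstein integers: the norm of `x + y τ`, where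
`τ = exp (π i / 3)`, so that `τ ^ 2 = τ - 1`. -/
def Q (z : ℤ × ℤ) : ℤ := z.1 ^ 2 + z.1 * z.2 + z.2 ^ 2

/-- Multiplication of Eisenstein integers in the basis `1, τ` with `τ ^ 2 = τ - 1`. -/
def emul (w z : ℤ × ℤ) : ℤ × ℤ := (w.1 * z.1 - w.2 * z.2, w.1 * z.2 + w.2 * z.1 + w.2 * z.2)

/-- Conjugation of Eisenstein integers, `τ ↦ 1 - τ`. -/
def econj (w : ℤ × ℤ) : ℤ × ℤ := (w.1 + w.2, -w.2)

/-- The set of Eisenstein integers of norm `n`. -/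
def S (n : ℕ) : Set (ℤ × ℤ) := {z | Q z = n}

/-- The non-principal character modulo `3`. -/
def chi (n : ℕ) : ℤ := if n % 3 = 1 then 1 else if n % 3 = 2 then -1 else 0

/-- The divisor sum `∑ d ∣ n, χ(d)`. -/
def F (n : ℕ) : ℤ := ∑ d ∈ n.divisors, chi d

lemma Q_mul (w z : ℤ × ℤ) : Q (emul w z) = Q w * Q z := by simp only [Q, emul]; ring

lemma Q_conj (w : ℤ × ℤ) : Q (econj w) = Q w := by simp only [Q, econj]; ring

lemma Q_nonneg (z : ℤ × ℤ) : 0 ≤ Q z := by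
  unfold Q; nlinarith [sq_nonneg (z.1 + z.2), sq_nonneg z.1, sq_nonneg z.2]

lemma two_Q_ge (z : ℤ × ℤ) : z.1 ^ 2 + z.2 ^ 2 ≤ 2 * Q z := by
  unfold Q; nlinarith [sq_nonneg (z.1 + z.2)]

lemma Q_eq_zero {z : ℤ × ℤ} (h : Q z = 0) : z = 0 := by
  have h2 := two_Q_ge z
  have h3 : z.1 = 0 := by
    apply pow_eq_zero_iff (two_ne_zero) |>.1; nlinarith [sq_nonneg z.1, sq_nonneg z.2]
  have h4 : z.2 = 0 := by
    apply pow_eq_zero_iff (two_ne_zero) |>.1; nlinarith [sq_nonneg z.1, sq_nonneg z.2]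
  exact Prod.ext h3 h4

lemma emul_injective {w : ℤ × ℤ} (hw : Q w ≠ 0) : Function.Injective (emul w) := by
  intro z z' h
  have h0 : emul w (z - z') = 0 := by
    have h1 := congrArg Prod.fst h
    have h2 := congrArg Prod.snd h
    simp only [emul] at h1 h2
    ext <;> simp only [emul, Prod.fst_sub, Prod.snd_sub, Prod.fst_zero, Prod.snd_zero] <;> linarith
  have h3 : Q w * Q (z - z') = 0 := by rw [← Q_mul, h0]; rfl
  exact sub_eq_zero.1 (Q_eq_zero ((mul_eq_zero.1 h3).resolve_left hw))

lemma S_finite (n : ℕ) : (S n).Finite := by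
  apply (Set.finite_Icc ((-2 * n, -2 * n) : ℤ × ℤ) (2 * n, 2 * n)).subset
  intro z hz
  have hz : Q z = n := hz
  have h := two_Q_ge z
  rw [hz] at h
  have a : ∀ x : ℤ, x ^ 2 ≤ 2 * n → -2 * (n : ℤ) ≤ x ∧ x ≤ 2 * n := by
    intro x hx
    constructor <;> nlinarith
  have h1 := a z.1 (by nlinarith [sq_nonneg z.2])
  have h2 := a z.2 (by nlinarith [sq_nonneg z.1])
  exact ⟨⟨h1.1, h2.1⟩, ⟨h1.2, h2.2⟩⟩

lemma chi_mul (m n : ℕ) : chi (m * n) = chi m * chi n := by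
  unfold chi
  rw [Nat.mul_mod]
  have h1 : m % 3 < 3 := Nat.mod_lt _ (by norm_num)
  have h2 : n % 3 < 3 := Nat.mod_lt _ (by norm_num)
  interval_cases m % 3 <;> interval_cases n % 3 <;> simp

/-- The recurrence for the divisor sum: a divisor of `p n` divides `n` or is `p` times a divisor
of `n`, and both happen exactly for `p` times a divisor of `n / p`. -/
lemma F_rec {p n : ℕ} (hp : p.Prime) (hn : n ≠ 0) :
    F (p * n) + chi p * (if p ∣ n then F (n / p) else 0) = (1 + chi p) * F n := by
  have hp0 := hp.ne_zero
  have inj : ∀ m : ℕ, ∑ d ∈ m.divisors.image (p * ·), chi d = chi p * F m := by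
    intro m
    rw [Finset.sum_image (fun a _ b _ h => Nat.eq_of_mul_eq_mul_left hp.pos h), F, Finset.mul_sum]
    exact Finset.sum_congr rfl fun d _ => chi_mul p d
  have hU : (p * n).divisors = n.divisors ∪ n.divisors.image (p * ·) := by
    ext d
    simp only [Finset.mem_union, Finset.mem_image, Nat.mem_divisors]
    constructor
    · rintro ⟨h, -⟩
      by_cases hd : p ∣ d
      · obtain ⟨e, rfl⟩ := hd
        exact Or.inr ⟨e, ⟨Nat.dvd_of_mul_dvd_mul_left hp.pos h, hn⟩, rfl⟩
      · exact Or.inl ⟨((hp.coprime_iff_not_dvd.2 hd).symm).dvd_of_dvd_mul_left h, hn⟩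
    · rintro (⟨h, -⟩ | ⟨e, ⟨h, -⟩, rfl⟩)
      · exact ⟨h.mul_left p, by positivity⟩
      · exact ⟨Nat.mul_dvd_mul_left p h, by positivity⟩
  have hI : ∑ d ∈ n.divisors ∩ n.divisors.image (p * ·), chi d
      = chi p * (if p ∣ n then F (n / p) else 0) := by
    split_ifs with h
    · obtain ⟨m, rfl⟩ := h
      rw [Nat.mul_div_cancel_left _ hp.pos, ← inj]
      congr 1
      ext d
      simp only [Finset.mem_inter, Finset.mem_image, Nat.mem_divisors]
      constructor
      · rintro ⟨⟨h, -⟩, e, ⟨h', -⟩, rfl⟩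
        exact ⟨e, ⟨Nat.dvd_of_mul_dvd_mul_left hp.pos h, by rintro rfl; simp at hn⟩, rfl⟩
      · rintro ⟨e, ⟨h', -⟩, rfl⟩
        exact ⟨⟨Nat.mul_dvd_mul_left p h', hn⟩, e, ⟨h'.mul_left p, hn⟩, rfl⟩
    · rw [mul_zero]
      apply Finset.sum_eq_zero
      intro d hd
      simp only [Finset.mem_inter, Finset.mem_image, Nat.mem_divisors] at hd
      obtain ⟨⟨h1, -⟩, e, -, rfl⟩ := hd
      exact absurd (dvd_of_mul_right_dvd h1) h
  rw [← hI, F, hU, Finset.sum_union_inter, inj, F]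
  ring

/-! ### The recurrence for the number of elements of given norm -/

lemma not_dvd_fst {p : ℕ} (hp : p.Prime) {a b : ℤ} (h : Q (a, b) = p) : ¬ (p : ℤ) ∣ a := by
  rintro ⟨c, rfl⟩
  have hP := Nat.prime_iff_prime_int.1 hp
  simp only [Q] at h
  have hb : (p : ℤ) ∣ b := by
    apply hP.dvd_of_dvd_pow (n := 2)
    exact ⟨1 - p * c ^ 2 - c * b, by linear_combination h⟩
  obtain ⟨d, rfl⟩ := hb
  apply hP.not_dvd_one
  refine ⟨c ^ 2 + c * d + d ^ 2, ?_⟩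
  have : (p : ℤ) ≠ 0 := hP.ne_zero
  apply mul_left_cancel₀ this
  linear_combination -h

/-- `w = a + b τ` of prime norm `p` divides `u + v τ` as soon as `p` divides the `τ`-coordinate
`a v - b u` of the product of `u + v τ` with the conjugate of `w`. -/
lemma exists_emul {p : ℕ} (hp : p.Prime) {w z : ℤ × ℤ} (h : Q w = p)
    (hd : (p : ℤ) ∣ w.1 * z.2 - w.2 * z.1) : ∃ y, emul w y = z := by
  obtain ⟨a, b⟩ := w
  obtain ⟨u, v⟩ := z
  have hP := Nat.prime_iff_prime_int.1 hp
  have ha := not_dvd_fst hp h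
  simp only [Q] at h
  simp only at hd
  obtain ⟨k, hk⟩ := hd
  have h1 : (p : ℤ) ∣ a * ((a + b) * u + b * v) :=
    ⟨u + b * k, by linear_combination u * h + b * hk⟩
  obtain ⟨l, hl⟩ := (hP.dvd_or_dvd h1).resolve_left ha
  refine ⟨(l, k), ?_⟩
  have hp0 : (p : ℤ) ≠ 0 := hP.ne_zero
  ext <;> simp only [emul] <;> apply mul_left_cancel₀ hp0
  · linear_combination u * h - a * hl + b * hk
  · linear_combination v * h - (a + b) * hk - b * hl

/-- Division by `p` maps the multiples of `p` of norm `p n` bijectively onto the elements of norm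
`n / p`; there are none unless `p ∣ n`. -/
lemma ncard_smul {p : ℕ} (hp : p.Prime) (n : ℕ) :
    {z ∈ S (p * n) | (p : ℤ) ∣ z.1 ∧ (p : ℤ) ∣ z.2}.ncard
      = if p ∣ n then (S (n / p)).ncard else 0 := by
  have hp0 : (p : ℤ) ≠ 0 := by exact_mod_cast hp.ne_zero
  split_ifs with h
  · obtain ⟨m, rfl⟩ := h
    rw [Nat.mul_div_cancel_left _ hp.pos]
    have : Function.Injective (fun z : ℤ × ℤ => ((p : ℤ) * z.1, (p : ℤ) * z.2)) := by
      intro z z' h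
      simp only [Prod.mk.injEq] at h
      exact Prod.ext (mul_left_cancel₀ hp0 h.1) (mul_left_cancel₀ hp0 h.2)
    rw [← Set.ncard_image_of_injective (S m) this]
    congr 1
    ext ⟨u, v⟩
    simp only [S, Set.mem_ofPred_eq, Set.mem_image, Q, Prod.mk.injEq, Prod.exists]
    constructor
    · rintro ⟨h, ⟨x, rfl⟩, ⟨y, rfl⟩⟩
      refine ⟨x, y, ?_, rfl, rfl⟩
      push_cast at h
      apply mul_left_cancel₀ (mul_ne_zero hp0 hp0)
      linear_combination h
    · rintro ⟨x, y, h, rfl, rfl⟩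
      refine ⟨?_, dvd_mul_right _ _, dvd_mul_right _ _⟩
      push_cast
      linear_combination (p : ℤ) ^ 2 * h
  · convert Set.ncard_empty (ℤ × ℤ)
    ext ⟨u, v⟩
    simp only [S, Set.mem_ofPred_eq, Q, Set.mem_empty_iff_false, iff_false]
    rintro ⟨h1, ⟨x, rfl⟩, ⟨y, rfl⟩⟩
    apply h
    rw [← Int.natCast_dvd_natCast]
    refine ⟨x ^ 2 + x * y + y ^ 2, ?_⟩
    push_cast at h1
    apply mul_left_cancel₀ hp0
    linear_combination -h1

lemma image_subset_S {p n : ℕ} {w : ℤ × ℤ} (h : Q w = p) : emul w '' S n ⊆ S (p * n) := by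
  rintro _ ⟨z, hz, rfl⟩
  have hz : Q z = n := hz
  simp [S, Q_mul, h, hz]

lemma mem_image_S {p n : ℕ} (hp : p.Prime) {w z : ℤ × ℤ} (h : Q w = p) (hz : z ∈ S (p * n))
    (hd : (p : ℤ) ∣ w.1 * z.2 - w.2 * z.1) : z ∈ emul w '' S n := by
  obtain ⟨y, rfl⟩ := exists_emul hp h hd
  refine ⟨y, ?_, rfl⟩
  have hz : Q (emul w y) = (p * n : ℕ) := hz
  have hp0 : (p : ℤ) ≠ 0 := by exact_mod_cast hp.ne_zero
  rw [Q_mul, h] at hz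
  push_cast at hz
  exact mul_left_cancel₀ hp0 hz

/-- Split primes: an element of norm `p n` is divisible by `w` or by its conjugate, and by both
exactly when it is divisible by `p`. -/
lemma N_rec_split {p : ℕ} (hp : p.Prime) (h3 : p ≠ 3) (n : ℕ) {w : ℤ × ℤ} (h : Q w = p) :
    (S (p * n)).ncard + (if p ∣ n then (S (n / p)).ncard else 0) = 2 * (S n).ncard := by
  have hP := Nat.prime_iff_prime_int.1 hp
  have hp0 : (p : ℤ) ≠ 0 := hP.ne_zero
  have h' : Q (econj w) = p := by rw [Q_conj, h]
  have hU : S (p * n) = emul w '' S n ∪ emul (econj w) '' S n := by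
    apply Set.Subset.antisymm
    · intro z hz
      have hz' : Q z = (p * n : ℕ) := hz
      have : (p : ℤ) ∣ (w.1 * z.2 - w.2 * z.1) * ((econj w).1 * z.2 - (econj w).2 * z.1) := by
        refine ⟨z.2 ^ 2 - w.2 ^ 2 * n, ?_⟩
        push_cast at hz'
        simp only [Q, econj] at *
        linear_combination z.2 ^ 2 * h - w.2 ^ 2 * hz'
      rcases hP.dvd_or_dvd this with hd | hd
      · exact Or.inl (mem_image_S hp h hz hd)
      · exact Or.inr (mem_image_S hp h' hz hd)
    · exact Set.union_subset (image_subset_S h) (image_subset_S h')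
  have hI : emul w '' S n ∩ emul (econj w) '' S n
      = {z ∈ S (p * n) | (p : ℤ) ∣ z.1 ∧ (p : ℤ) ∣ z.2} := by
    apply Set.Subset.antisymm
    · rintro z ⟨hz1, y', hy', hz2⟩
      refine ⟨image_subset_S h hz1, ?_⟩
      obtain ⟨y, hy, rfl⟩ := hz1
      -- `e1` and `e2` are the `τ`-coordinates of `z` times the conjugates of `w` and `econj w`.
      have e1 : w.1 * (emul w y).2 - w.2 * (emul w y).1 = p * y.2 := by
        rw [← h]; simp only [emul, Q]; ring
      have e2 : (w.1 + w.2) * (emul w y).2 + w.2 * (emul w y).1 = p * y'.2 := by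
        rw [← hz2, ← h]; simp only [emul, econj, Q]; ring
      generalize emul w y = z at *
      have hb : ¬ (p : ℤ) ∣ w.2 := by
        apply not_dvd_fst hp (b := w.1)
        rw [← h]; simp only [Q]; ring
      have hs : ¬ (p : ℤ) ∣ 2 * w.1 + w.2 := by
        rintro ⟨c, hc⟩
        have h3b : (p : ℤ) ∣ 3 * w.2 ^ 2 := by
          refine ⟨4 - c * (2 * w.1 + w.2), ?_⟩
          simp only [Q] at h
          linear_combination 4 * h - (2 * w.1 + w.2) * hc
        rcases hP.dvd_or_dvd h3b with h | h
        · have : p ∣ 3 := by exact_mod_cast h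
          exact h3 ((Nat.prime_dvd_prime_iff_eq hp Nat.prime_three).1 this)
        · exact hb (hP.dvd_of_dvd_pow h)
      have hv : (p : ℤ) ∣ z.2 := by
        have : (p : ℤ) ∣ (2 * w.1 + w.2) * z.2 := ⟨y.2 + y'.2, by linear_combination e1 + e2⟩
        exact (hP.dvd_or_dvd this).resolve_left hs
      have hu : (p : ℤ) ∣ z.1 := by
        have : (p : ℤ) ∣ w.2 * z.1 := by
          have : w.2 * z.1 = w.1 * z.2 - p * y.2 := by linear_combination -e1
          rw [this]
          exact dvd_sub (hv.mul_left _) (dvd_mul_right _ _)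
        exact (hP.dvd_or_dvd this).resolve_left hb
      exact ⟨hu, hv⟩
    · rintro z ⟨hz, hu, hv⟩
      exact ⟨mem_image_S hp h hz (dvd_sub (hv.mul_left _) (hu.mul_left _)),
        mem_image_S hp h' hz (dvd_sub (hv.mul_left _) (hu.mul_left _))⟩
  have hfin : ∀ w : ℤ × ℤ, (emul w '' S n).Finite := fun w => (S_finite n).image _
  have key := Set.ncard_union_add_ncard_inter (emul w '' S n) (emul (econj w) '' S n)
    (hfin _) (hfin _)
  rw [← hU, hI, ncard_smul hp, Set.ncard_image_of_injective _ (emul_injective (by rw [h]; exact hp0)),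
    Set.ncard_image_of_injective _ (emul_injective (by rw [h']; exact hp0))] at key
  rw [key]; ring

/-- The ramified prime: `1 + τ` has norm `3` and divides every element of norm divisible
by `3`. -/
lemma N_rec_three (n : ℕ) : (S (3 * n)).ncard = (S n).ncard := by
  have h : Q (1, 1) = (3 : ℕ) := by norm_num [Q]
  rw [← Set.ncard_image_of_injective (S n) (emul_injective (w := (1, 1)) (by rw [h]; norm_num))]
  congr 1
  apply Set.Subset.antisymm _ (image_subset_S h)
  intro z hz
  apply mem_image_S Nat.prime_three h hz
  have hz' : Q z = (3 * n : ℕ) := hz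
  have h3 : Prime ((3 : ℕ) : ℤ) := Nat.prime_iff_prime_int.1 Nat.prime_three
  apply h3.dvd_of_dvd_pow (n := 2)
  refine ⟨n - z.1 * z.2, ?_⟩
  simp only [Q] at hz'
  push_cast at *
  linear_combination hz'

lemma no_root {p : ℕ} (hp : p.Prime) (h3 : p % 3 = 2) [Fact p.Prime] (r : ZMod p)
    (h : r ^ 2 + r + 1 = 0) : False := by
  have hr3 : r ^ 3 = 1 := by linear_combination (r - 1) * h
  have hr0 : r ≠ 0 := by rintro rfl; simp at h
  have hf := ZMod.pow_card_sub_one_eq_one hr0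
  have hr1 : r = 1 := by
    have e : p - 1 = 3 * (p / 3) + 1 := by omega
    rw [e, pow_succ, pow_mul, hr3, one_pow, one_mul] at hf
    exact hf
  rw [hr1] at h
  have : ((3 : ℕ) : ZMod p) = 0 := by push_cast; linear_combination h
  rw [ZMod.natCast_eq_zero_iff] at this
  have := (Nat.prime_dvd_prime_iff_eq hp Nat.prime_three).1 this
  omega

lemma exists_root {p : ℕ} (h1 : p % 3 = 1) [Fact p.Prime] :
    ∃ r : ZMod p, r ^ 2 + r + 1 = 0 := by
  have : Fact (Nat.Prime 3) := ⟨Nat.prime_three⟩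
  obtain ⟨g, hg⟩ := exists_prime_orderOf_dvd_card (G := (ZMod p)ˣ) 3
    (by rw [ZMod.card_units]; omega)
  have h3 : (g : ZMod p) ^ 3 = 1 := by
    rw [← Units.val_pow_eq_pow_val, ← hg, pow_orderOf_eq_one]; rfl
  have hne : (g : ZMod p) - 1 ≠ 0 := by
    intro h
    have : g = 1 := Units.ext (by simpa using sub_eq_zero.1 h)
    rw [this, orderOf_one] at hg
    omega
  exact ⟨g, mul_left_cancel₀ hne (by linear_combination h3)⟩
/-- Inert primes: a norm divisible by `p` forces divisibility by `p`, since otherwise `ZMod p`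
would contain a primitive cube root of unity. -/
lemma inert_dvd {p : ℕ} (hp : p.Prime) (h3 : p % 3 = 2) {z : ℤ × ℤ} (h : (p : ℤ) ∣ Q z) :
    (p : ℤ) ∣ z.1 ∧ (p : ℤ) ∣ z.2 := by
  have : Fact p.Prime := ⟨hp⟩
  simp only [← ZMod.intCast_zmod_eq_zero_iff_dvd, Q] at *
  push_cast at h
  have hy : (z.2 : ZMod p) = 0 := by
    by_contra hy
    apply no_root hp h3 ((z.1 : ZMod p) / z.2)
    field_simp
    linear_combination h
  refine ⟨?_, hy⟩
  rw [hy] at h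
  simpa using h

/-- Thue's argument: if `r ^ 2 + r + 1 = 0` in `ZMod p`, the pigeonhole principle gives `x`, `y`, not
both zero and of absolute value below `√p`, with `x = r y` in `ZMod p`. Then `Q (x, y)` is a
multiple of `p` strictly between `0` and `3 p`, and parity excludes `2 p`. -/
lemma exists_norm {p : ℕ} (hp : p.Prime) (h1 : p % 3 = 1) : ∃ w, Q w = p := by
  have : Fact p.Prime := ⟨hp⟩
  obtain ⟨r, hr⟩ := exists_root h1
  set k := Nat.sqrt p with hk
  have hk1 : p < (k + 1) * (k + 1) := Nat.lt_succ_sqrt p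
  have hk2 : k * k < p := by
    apply lt_of_le_of_ne (Nat.sqrt_le p)
    intro h
    have hi := hp.prime.irreducible
    rw [← h] at hi
    rcases hi.isUnit_or_isUnit rfl with hu | hu <;>
    · rw [Nat.isUnit_iff] at hu
      have hp1 := hp.two_le
      rw [hu] at h
      omega
  obtain ⟨s, t, hst, he⟩ := Fintype.exists_ne_map_eq_of_card_lt
    (fun s : Fin (k + 1) × Fin (k + 1) => ((s.1 : ℕ) : ZMod p) - r * ((s.2 : ℕ) : ZMod p))
    (by simpa [ZMod.card] using hk1)
  obtain ⟨⟨s1, hs1⟩, ⟨s2, hs2⟩⟩ := s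
  obtain ⟨⟨t1, ht1⟩, ⟨t2, ht2⟩⟩ := t
  simp only at he
  obtain ⟨x, hx⟩ : ∃ x : ℤ, x = s1 - t1 := ⟨_, rfl⟩
  obtain ⟨y, hy⟩ : ∃ y : ℤ, y = s2 - t2 := ⟨_, rfl⟩
  have hxk : |x| ≤ k := by rw [abs_le]; omega
  have hyk : |y| ≤ k := by rw [abs_le]; omega
  have hxy : ¬ (x = 0 ∧ y = 0) := by
    rintro ⟨h, h'⟩
    apply hst
    simp only [Prod.mk.injEq, Fin.mk.injEq]
    omega
  have hd : (p : ℤ) ∣ x ^ 2 + x * y + y ^ 2 := by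
    rw [← ZMod.intCast_zmod_eq_zero_iff_dvd]
    have e : (x : ZMod p) = r * y := by
      rw [hx, hy]; push_cast; linear_combination he
    push_cast
    rw [e]
    linear_combination (y : ZMod p) ^ 2 * hr
  have hpos : 0 < x ^ 2 + x * y + y ^ 2 := by
    by_contra hle
    apply hxy
    constructor <;> apply (pow_eq_zero_iff two_ne_zero).1 <;>
      nlinarith [sq_nonneg x, sq_nonneg y, sq_nonneg (x + y)]
  have hlt : x ^ 2 + x * y + y ^ 2 < 3 * p := by
    have hx2 : x ^ 2 ≤ k ^ 2 := sq_le_sq' (abs_le.1 hxk).1 (abs_le.1 hxk).2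
    have hy2 : y ^ 2 ≤ k ^ 2 := sq_le_sq' (abs_le.1 hyk).1 (abs_le.1 hyk).2
    zify at hk2
    nlinarith [sq_nonneg (x - y)]
  obtain ⟨c, hc⟩ := hd
  have hp0 : (0 : ℤ) < p := by exact_mod_cast hp.pos
  have hc0 : 0 < c := by
    rw [hc] at hpos; exact (mul_pos_iff_of_pos_left hp0).1 hpos
  have hc3 : c < 3 := by
    rw [hc] at hlt; nlinarith
  refine ⟨(x, y), ?_⟩
  simp only [Q]
  interval_cases c
  · linarith
  · exfalso
    -- The form takes an even value only if `x` and `y` are even, so `4` divides `2 p`.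
    have hev : x % 2 = 0 ∧ y % 2 = 0 := by
      have hm : (x ^ 2 + x * y + y ^ 2) % 2 = 0 := by rw [hc]; omega
      rcases Int.emod_two_eq_zero_or_one x with h | h <;>
        rcases Int.emod_two_eq_zero_or_one y with h' | h' <;>
        simp [Int.add_emod, Int.mul_emod, pow_two, h, h'] at hm ⊢
    obtain ⟨u, rfl⟩ := Int.dvd_of_emod_eq_zero hev.1
    obtain ⟨v, rfl⟩ := Int.dvd_of_emod_eq_zero hev.2
    have h2 : (2 : ℤ) ∣ p := ⟨u ^ 2 + u * v + v ^ 2, by linarith⟩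
    have := (Nat.prime_dvd_prime_iff_eq Nat.prime_two hp).1 (by exact_mod_cast h2)
    omega

lemma N_rec_inert {p : ℕ} (hp : p.Prime) (h3 : p % 3 = 2) (n : ℕ) :
    (S (p * n)).ncard = if p ∣ n then (S (n / p)).ncard else 0 := by
  rw [← ncard_smul hp]
  congr 1
  ext z
  refine ⟨fun hz => ⟨hz, inert_dvd hp h3 ?_⟩, fun hz => hz.1⟩
  have hz : Q z = (p * n : ℕ) := hz
  rw [hz]; push_cast; exact dvd_mul_right _ _

/-- The number of Eisenstein integers of norm `n` satisfies the recurrence of the divisor sum. -/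
lemma N_rec {p : ℕ} (hp : p.Prime) (n : ℕ) :
    ((S (p * n)).ncard : ℤ) + chi p * (if p ∣ n then ((S (n / p)).ncard : ℤ) else 0)
      = (1 + chi p) * (S n).ncard := by
  have : p % 3 < 3 := Nat.mod_lt _ (by norm_num)
  have hc : p % 3 = 0 ∨ p % 3 = 1 ∨ p % 3 = 2 := by omega
  rcases hc with h | h | h
  · obtain rfl : p = 3 := ((Nat.prime_dvd_prime_iff_eq Nat.prime_three hp).1
      (Nat.dvd_of_mod_eq_zero h)).symm
    simp [chi, N_rec_three]
  · obtain ⟨w, hw⟩ := exists_norm hp h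
    have := N_rec_split hp (by rintro rfl; simp at h) n hw
    simp only [chi, h, if_true]
    split_ifs at this ⊢ <;> omega
  · have := N_rec_inert hp h n
    simp only [chi, h]
    rw [this]
    split_ifs <;> simp_all

lemma S_zero : S 0 = {0} := by
  ext z
  simp only [S, Set.mem_ofPred_eq, Set.mem_singleton_iff]
  exact ⟨fun h => Q_eq_zero (by simpa using h), by rintro rfl; rfl⟩

lemma S_one : (S 1).ncard = 6 := by
  have : S 1 = (({(1, 0), (-1, 0), (0, 1), (0, -1), (1, -1), (-1, 1)} : Finset (ℤ × ℤ)) :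
      Set (ℤ × ℤ)) := by
    ext ⟨x, y⟩
    simp only [S, Set.mem_ofPred_eq, Q]
    constructor
    · intro h
      push_cast at h
      have hx : -1 ≤ x ∧ x ≤ 1 := by constructor <;> nlinarith [sq_nonneg (x + 2 * y)]
      have hy : -1 ≤ y ∧ y ≤ 1 := by constructor <;> nlinarith [sq_nonneg (2 * x + y)]
      obtain ⟨hx1, hx2⟩ := hx
      obtain ⟨hy1, hy2⟩ := hy
      interval_cases x <;> interval_cases y <;> simp_all
    · intro h
      simp at h
      rcases h with h | h | h | h | h | h <;> obtain ⟨rfl, rfl⟩ := h <;> norm_num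
  rw [this, Set.ncard_coe_finset]
  rfl

/-- Strong induction along `N_rec` and `F_rec`, removing one prime factor at a time. -/
lemma N_eq (n : ℕ) (hn : n ≠ 0) : ((S n).ncard : ℤ) = 6 * F n := by
  induction n using Nat.strong_induction_on with
  | _ n ih =>
    by_cases h1 : n = 1
    · subst h1
      rw [S_one]; simp [F, chi]
    · obtain ⟨p, hp, m, rfl⟩ := Nat.exists_prime_and_dvd h1
      have hm : m ≠ 0 := by rintro rfl; simp at hn
      have hlt : m < p * m := by nlinarith [hp.two_le, Nat.pos_of_ne_zero hm]
      have a := N_rec hp m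
      have b := F_rec hp hm
      have c := ih m hlt hm
      have d : (if p ∣ m then ((S (m / p)).ncard : ℤ) else 0)
          = 6 * (if p ∣ m then F (m / p) else 0) := by
        split_ifs with h
        · exact ih _ ((Nat.div_le_self _ _).trans_lt hlt)
            (Nat.div_pos (Nat.le_of_dvd (Nat.pos_of_ne_zero hm) h) hp.pos).ne'
        · simp
      rw [c, d] at a
      linear_combination a - 6 * b

/-! ### Generating series -/

/-- With `s = √q`, the term at `(x, y)` is at most `s ^ |x| * s ^ |y|`, because
`2 Q(x, y) ≥ x ^ 2 + y ^ 2 ≥ |x| + |y|`. -/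
lemma summable_Q (q : ℝ) (hq0 : 0 < q) (hq1 : q < 1) :
    Summable fun z : ℤ × ℤ => q ^ (Q z) := by
  set s := √q with hs
  have hs0 : 0 < s := Real.sqrt_pos.2 hq0
  have hs1 : s < 1 := by rw [hs, Real.sqrt_lt' one_pos]; simpa using hq1
  have hsq : q = s ^ (2 : ℤ) := by
    rw [hs]; exact_mod_cast (Real.sq_sqrt hq0.le).symm
  have h1 : Summable fun x : ℤ => s ^ |x| := by
    apply Summable.of_nat_of_neg <;>
    · simp only [abs_neg, Nat.abs_cast, zpow_natCast]
      exact summable_geometric_of_lt_one hs0.le hs1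
  have h2 := h1.mul_of_nonneg h1 (fun x => (zpow_pos hs0 _).le) (fun x => (zpow_pos hs0 _).le)
  refine Summable.of_nonneg_of_le (fun z => (zpow_pos hq0 _).le) (fun z => ?_) h2
  rw [hsq, ← zpow_mul, ← zpow_add₀ hs0.ne']
  apply zpow_le_zpow_right_of_le_one₀ hs0 hs1.le
  have h := two_Q_ge z
  have a : ∀ x : ℤ, |x| ≤ x ^ 2 := fun x => by
    rw [← sq_abs]; nlinarith [abs_nonneg x, Int.le_self_sq |x|]
  linarith [a z.1, a z.2]

lemma tsum_fiber (q : ℝ) (n : ℕ) :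
    ∑' z : (fun z : ℤ × ℤ => (Q z).toNat) ⁻¹' {n}, q ^ (Q z.1) = (S n).ncard * q ^ n := by
  have hS : (fun z : ℤ × ℤ => (Q z).toNat) ⁻¹' {n} = S n := by
    ext z
    have := Q_nonneg z
    simp only [Set.mem_preimage, Set.mem_singleton_iff, S, Set.mem_ofPred_eq]
    omega
  rw [hS]
  have : ∀ z : S n, q ^ (Q z.1) = q ^ n := fun z => by
    have hz : Q z.1 = n := z.2
    rw [hz, zpow_natCast]
  simp only [this]
  rw [tsum_const, Nat.card_coe_set_eq, nsmul_eq_mul]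

/-- Collecting the theta series by the value of the norm form. -/
lemma hasSum_theta (q : ℝ) (hq0 : 0 < q) (hq1 : q < 1) :
    HasSum (fun n : ℕ => ((S n).ncard : ℝ) * q ^ n) (∑' z : ℤ × ℤ, q ^ (Q z)) := by
  have := (summable_Q q hq0 hq1).hasSum.tsum_fiberwise (fun z : ℤ × ℤ => (Q z).toNat)
  simpa only [tsum_fiber] using this

lemma abs_chi_le (n : ℕ) : |(chi n : ℝ)| ≤ 1 := by
  unfold chi; split_ifs <;> simp

lemma summable_lambert (q : ℝ) (hq0 : 0 < q) (hq1 : q < 1) :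
    Summable fun c : ℕ+ × ℕ+ => (chi c.1 : ℝ) * q ^ (c.1 * c.2 : ℕ) := by
  have hq : ‖q‖ < 1 := by rwa [Real.norm_of_nonneg hq0.le]
  refine Summable.of_norm_bounded (summable_prod_mul_pow 0 hq) fun c => ?_
  rw [norm_mul, Real.norm_eq_abs, Real.norm_of_nonneg (by positivity : (0:ℝ) ≤ q ^ (c.1 * c.2 : ℕ)),
    pow_zero]
  exact mul_le_mul_of_nonneg_right (abs_chi_le _) (by positivity)

lemma hasSum_lambert_left (q : ℝ) (hq0 : 0 < q) (hq1 : q < 1) :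
    HasSum (fun n : ℕ+ => (F n : ℝ) * q ^ (n : ℕ))
      (∑' c : ℕ+ × ℕ+, (chi c.1 : ℝ) * q ^ (c.1 * c.2 : ℕ)) := by
  have h := (sigmaAntidiagonalEquivProd.hasSum_iff.2 (summable_lambert q hq0 hq1).hasSum)
  refine h.sigma fun n => ?_
  have e : (F n : ℝ) * q ^ (n : ℕ)
      = ∑ x : Nat.divisorsAntidiagonal n, (chi x.1.1 : ℝ) * q ^ (n : ℕ) := by
    rw [Finset.sum_coe_sort (Nat.divisorsAntidiagonal n) (fun x => (chi x.1 : ℝ) * q ^ (n : ℕ)),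
      Nat.sum_divisorsAntidiagonal (fun x y => (chi x : ℝ) * q ^ (n : ℕ)), F, ← Finset.sum_mul]
    push_cast
    rfl
  rw [e]
  convert hasSum_fintype _ using 2 with x
  simp [sigmaAntidiagonalEquivProd, divisorsAntidiagonalFactors,
    (Nat.mem_divisorsAntidiagonal.1 x.2).1]

lemma hasSum_lambert_right (q : ℝ) (hq0 : 0 < q) (hq1 : q < 1) :
    HasSum (fun n : ℕ+ => (chi n : ℝ) * (q ^ (n : ℕ) / (1 - q ^ (n : ℕ))))
      (∑' c : ℕ+ × ℕ+, (chi c.1 : ℝ) * q ^ (c.1 * c.2 : ℕ)) := by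
  refine (summable_lambert q hq0 hq1).hasSum.prod_fiberwise fun n => HasSum.mul_left _ ?_
  have h := (hasSum_geometric_of_lt_one (r := q ^ (n : ℕ)) (by positivity)
    (pow_lt_one₀ hq0.le hq1 n.ne_zero)).mul_left (q ^ (n : ℕ))
  rw [← Equiv.pnatEquivNat.hasSum_iff, ← div_eq_mul_inv] at h
  convert h using 2 with m
  simp only [Function.comp, Equiv.pnatEquivNat_apply, PNat.natPred]
  rw [← pow_succ', ← pow_mul]
  congr 2
  have := m.pos
  omega

/-- Collecting the Lambert series by residues modulo `3`. -/
lemma hasSum_lambert_three (q s : ℝ)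
    (h : HasSum (fun n : ℕ+ => (chi n : ℝ) * (q ^ (n : ℕ) / (1 - q ^ (n : ℕ)))) s) :
    HasSum (fun n : ℕ => q ^ (3 * n + 1) / (1 - q ^ (3 * n + 1))
            - q ^ (3 * n + 2) / (1 - q ^ (3 * n + 2))) s := by
  have h0 : HasSum (fun n : ℕ => (chi n : ℝ) * (q ^ n / (1 - q ^ n))) s := by
    rw [← PNat.coe_injective.hasSum_iff]
    · exact h
    · intro x hx
      have : x = 0 := by
        by_contra hx0
        exact hx ⟨⟨x, Nat.pos_of_ne_zero hx0⟩, rfl⟩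
      simp [this, chi]
  rw [← (Nat.divModEquiv 3).symm.hasSum_iff] at h0
  refine h0.prod_fiberwise fun n => ?_
  convert hasSum_fintype (L := .unconditional (Fin 3)) _ using 1
  have c0 : chi (n * 3) = 0 := by unfold chi; simp
  have c1 : chi (n * 3 + 1) = 1 := by unfold chi; simp [Nat.add_mod]
  have c2 : chi (n * 3 + 2) = -1 := by unfold chi; simp [Nat.add_mod]
  simp [Fin.sum_univ_three, Nat.divModEquiv, c0, c1, c2, mul_comm 3 n]
  ring

theorem stmt_13 (q : ℝ) (hq0 : 0 < q) (hq1 : q < 1) :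
    ∑' p : ℤ × ℤ, q ^ ((p.1 ^ 2 + p.1 * p.2 + p.2 ^ 2 : ℤ))
      = 1 + 6 * ∑' n : ℕ,
          (q ^ (3 * n + 1) / (1 - q ^ (3 * n + 1))
            - q ^ (3 * n + 2) / (1 - q ^ (3 * n + 2))) := by
  have hL := hasSum_theta q hq0 hq1
  have hR := hasSum_lambert_three q _ (hasSum_lambert_right q hq0 hq1)
  have hF := (hasSum_lambert_left q hq0 hq1).mul_left 6
  rw [hR.tsum_eq, ← hF.tsum_eq.trans rfl]
  change ∑' z : ℤ × ℤ, q ^ (Q z) = _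
  rw [← hL.tsum_eq, ← tsum_zero_pnat_eq_tsum_nat hL.summable]
  congr 1
  · simp [S_zero]
  · refine tsum_congr fun n => ?_
    have h := N_eq n n.ne_zero
    have h' : ((S n).ncard : ℝ) = 6 * F n := by exact_mod_cast h
    rw [h']; ring
end

section
/- Let $\phi(q) = \sum_{n=-\infty}^{\infty} q^{n^2}$ for $0<q<1$. Then $\phi(q)^2 = 1 + 4\sum_{n=1}^{\infty}\left(\frac{q^{4n-3}}{1-q^{4n-3}} - \frac{q^{4n-1}}{1-q^{4n-1}}\right)$. -/
/-!
Write `φ(q) = ∑ q^(n²)` and `L(q) = ∑ 1 / (qⁿ + q⁻ⁿ)`, both over `n : ℤ`, for complex `0 < |q| < 1`.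
Expanding `1 / (qⁿ + q⁻ⁿ)` for `n ≥ 1` into geometric series and exchanging the summations turns
`2 L(q)` into the Lambert series of the theorem (`two_mul_lam`). What has to be shown is
`φ(q)² = 2 L(q)` (`theta_sq`), and no product formula is needed for that.

For `|w| = 1` consider the product of `∑ (-w)ⁿ q^(n²)` and `∑ wⁿ / (qⁿ + q⁻ⁿ)`. Its coefficients
satisfy a first-order recurrence (`conv_succ`), because `∑ (-1)ⁿ q^(n² - n) = 0`; hence the product
equals `T · ∑ wⁿ q^(n²)`, where `T` does not depend on `w` (`theta_mul_lam`). At `w = i` both theta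
series equal `φ(-q⁴)` and the other series equals `L(-q²)`, so `T = L(-q²)` (`conv_zero`). At `w = 1`
this gives `φ(-q) L(q) = L(-q²) φ(q)`. Together with `φ(q) φ(-q) = φ(-q²)²` (`theta_mul_theta_neg`)
it follows that `L / φ²` is invariant under `q ↦ -q²` (`ratio_eq`). Iterating this map sends `q` to
`0`, where `L / φ²` is continuous with value `1 / 2`.
-/

/-- The theta series `∑ wⁿ q^(n²)` over `n : ℤ`. The exponent is written as a natural power, so that
the series makes sense, and is continuous, at `q = 0`. -/
noncomputable def theta (w q : ℂ) : ℂ := ∑' n : ℤ, w ^ n * q ^ (n.natAbs ^ 2)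

/-- The coefficient `1 / (qⁿ + q⁻ⁿ)`, in the form `q^|n| / (1 + q^(2|n|))` that is also meaningful
at `q = 0`. -/
noncomputable def coeff (q : ℂ) (n : ℤ) : ℂ := q ^ n.natAbs / (1 + q ^ (2 * n.natAbs))

/-- The series `∑ wⁿ / (qⁿ + q⁻ⁿ)` over `n : ℤ`. -/
noncomputable def lam (w q : ℂ) : ℂ := ∑' n : ℤ, w ^ n * coeff q n

/-! ### Bounds and summability -/

lemma summable_pow_natAbs {r : ℝ} (h0 : 0 ≤ r) (h1 : r < 1) :
    Summable fun n : ℤ => r ^ n.natAbs := by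
  have := summable_geometric_of_lt_one h0 h1
  exact Summable.of_nat_of_neg (by simpa using this) (by simpa using this)

lemma norm_sq_pow_le {q : ℂ} {r : ℝ} (hq : ‖q‖ ≤ r) (h1 : r < 1) (n : ℤ) :
    ‖q ^ (n.natAbs ^ 2)‖ ≤ r ^ n.natAbs := by
  have h0 : 0 ≤ r := (norm_nonneg q).trans hq
  rw [norm_pow]
  calc ‖q‖ ^ (n.natAbs ^ 2) ≤ r ^ (n.natAbs ^ 2) := by gcongr
    _ ≤ r ^ n.natAbs := pow_le_pow_of_le_one h0 h1.le (Nat.le_self_pow two_ne_zero _)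

lemma one_sub_le_norm {q : ℂ} {r : ℝ} (hq : ‖q‖ ≤ r) (h1 : r < 1) (k : ℕ) :
    1 - r ≤ ‖1 + q ^ (2 * k)‖ := by
  have h0 : 0 ≤ r := (norm_nonneg q).trans hq
  rcases Nat.eq_zero_or_pos k with rfl | hk
  · norm_num; linarith
  · have h2 : ‖q ^ (2 * k)‖ ≤ r := by
      rw [norm_pow]
      calc ‖q‖ ^ (2 * k) ≤ r ^ (2 * k) := by gcongr
        _ ≤ r ^ 1 := pow_le_pow_of_le_one h0 h1.le (by omega)
        _ = r := pow_one r
    have h3 := norm_sub_norm_le (1 : ℂ) (-q ^ (2 * k))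
    rw [sub_neg_eq_add, norm_neg, norm_one] at h3
    linarith

lemma one_add_pow_ne_zero {q : ℂ} (hq : ‖q‖ < 1) (k : ℕ) : 1 + q ^ (2 * k) ≠ 0 := by
  have := one_sub_le_norm le_rfl hq k
  exact norm_pos_iff.mp (by linarith)

lemma norm_coeff_le {q : ℂ} {r : ℝ} (hq : ‖q‖ ≤ r) (h1 : r < 1) (n : ℤ) :
    ‖coeff q n‖ ≤ r ^ n.natAbs / (1 - r) := by
  have h0 : 0 ≤ r := (norm_nonneg q).trans hq
  rw [coeff, norm_div, norm_pow]
  have := one_sub_le_norm hq h1 n.natAbs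
  have : 0 < 1 - r := by linarith
  gcongr

lemma summable_norm_theta {w q : ℂ} (hw : ‖w‖ = 1) (hq : ‖q‖ < 1) :
    Summable fun n : ℤ => ‖w ^ n * q ^ (n.natAbs ^ 2)‖ := by
  refine Summable.of_nonneg_of_le (fun _ => norm_nonneg _) (fun n => ?_)
    (summable_pow_natAbs (norm_nonneg q) hq)
  rw [norm_mul, norm_zpow, hw, one_zpow, one_mul]
  exact norm_sq_pow_le le_rfl hq n

lemma summable_norm_lam {w q : ℂ} (hw : ‖w‖ = 1) (hq : ‖q‖ < 1) :
    Summable fun n : ℤ => ‖w ^ n * coeff q n‖ := by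
  refine Summable.of_nonneg_of_le (fun _ => norm_nonneg _) (fun n => ?_)
    ((summable_pow_natAbs (norm_nonneg q) hq).div_const (1 - ‖q‖))
  rw [norm_mul, norm_zpow, hw, one_zpow, one_mul]
  exact norm_coeff_le le_rfl hq n

lemma coeff_neg (q : ℂ) (n : ℤ) : coeff q (-n) = coeff q n := by simp [coeff]

lemma coeff_mul {q : ℂ} (h0 : q ≠ 0) (hq : ‖q‖ < 1) (n : ℤ) :
    coeff q n * (q ^ n + q ^ (-n)) = 1 := by
  have key (k : ℕ) : coeff q k * (q ^ (k : ℤ) + q ^ (-(k : ℤ))) = 1 := by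
    have h1 := one_add_pow_ne_zero hq k
    have h2 : q ^ k ≠ 0 := pow_ne_zero _ h0
    simp only [coeff, Int.natAbs_natCast, zpow_neg, zpow_natCast]
    field_simp
    ring
  obtain ⟨k, rfl | rfl⟩ := n.eq_nat_or_neg
  · exact key k
  · rw [coeff_neg, neg_neg, add_comm]; exact key k

lemma sq_pow_eq (q : ℂ) (n : ℤ) : q ^ (n.natAbs ^ 2) = q ^ (n ^ 2) := by
  rw [← Int.natAbs_sq n, ← zpow_natCast]; push_cast; rfl

/-! ### The convolution of the theta series with the Lambert-type series -/

lemma tsum_alternating_eq_zero (q : ℂ) : ∑' n : ℤ, (-1 : ℂ) ^ n * q ^ (n ^ 2 - n) = 0 := by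
  have h := (Equiv.subLeft (1 : ℤ)).tsum_eq fun n : ℤ => (-1 : ℂ) ^ n * q ^ (n ^ 2 - n)
  have h2 : ∀ n : ℤ, (-1 : ℂ) ^ (1 - n) * q ^ ((1 - n) ^ 2 - (1 - n))
      = -((-1 : ℂ) ^ n * q ^ (n ^ 2 - n)) := fun n => by
    rw [zpow_sub₀ (by norm_num), show (1 - n) ^ 2 - (1 - n) = n ^ 2 - n by ring]
    have : (-1 : ℂ) ^ n * (-1 : ℂ) ^ n = 1 := by rw [← mul_zpow]; simp
    have h3 : (-1 : ℂ) ^ n ≠ 0 := zpow_ne_zero _ (by norm_num)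
    rw [zpow_one, div_eq_mul_inv, ← eq_inv_of_mul_eq_one_left this]; ring
  simp only [Equiv.subLeft_apply, h2, tsum_neg] at h
  exact self_eq_neg.mp h.symm

/-- The coefficient of `w ^ N` in the product `theta (-w) q * lam w q`. -/
noncomputable def convCoeff (q : ℂ) (N : ℤ) : ℂ :=
  ∑' n : ℤ, (-1 : ℂ) ^ n * q ^ (n.natAbs ^ 2) * coeff q (N - n)

lemma summable_conv {q : ℂ} (hq : ‖q‖ < 1) (N : ℤ) :
    Summable fun n : ℤ => (-1 : ℂ) ^ n * q ^ (n.natAbs ^ 2) * coeff q (N - n) := by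
  refine Summable.of_norm_bounded
    ((summable_norm_theta (w := -1) (by simp) hq).mul_right (1 / (1 - ‖q‖))) fun n => ?_
  rw [norm_mul]
  gcongr
  refine (norm_coeff_le le_rfl hq _).trans ?_
  have : 0 < 1 - ‖q‖ := by linarith
  gcongr
  exact pow_le_one₀ (norm_nonneg q) hq.le

/-- Multiply `coeff q (N - n) * (q ^ (N - n) + q ^ (n - N)) = 1` by `(-1)ⁿ q^(n² - n)` and sum over
`n`: the right-hand side vanishes, and each half of the left-hand side is a multiple of a
convolution coefficient. -/
lemma conv_succ {q : ℂ} (h0 : q ≠ 0) (hq : ‖q‖ < 1) (N : ℤ) :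
    convCoeff q (N + 1) = q ^ (2 * N + 1) * convCoeff q N := by
  have s1 := (summable_conv hq (N + 1)).hasSum.mul_left (q ^ (-(N + 1)))
  have s2 := (((Equiv.subRight (1 : ℤ)).hasSum_iff).mpr
    (summable_conv hq N).hasSum).mul_left (-q ^ N)
  have s3 := s1.add s2
  have e : ∀ n : ℤ, q ^ (-(N + 1)) * ((-1 : ℂ) ^ n * q ^ (n.natAbs ^ 2) * coeff q (N + 1 - n))
      + -q ^ N * (((fun n : ℤ => (-1 : ℂ) ^ n * q ^ (n.natAbs ^ 2) * coeff q (N - n)) ∘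
        (Equiv.subRight (1 : ℤ))) n) = (-1 : ℂ) ^ n * q ^ (n ^ 2 - n) := fun n => by
    have hc := coeff_mul h0 hq (N + 1 - n)
    simp only [Function.comp, Equiv.subRight_apply, sq_pow_eq]
    rw [show N - (n - 1) = N + 1 - n by ring]
    have e1 : q ^ (-(N + 1)) * q ^ (n ^ 2) = q ^ (n ^ 2 - n) * q ^ (-(N + 1 - n)) := by
      rw [← zpow_add₀ h0, ← zpow_add₀ h0]; congr 1; ring
    have e2 : q ^ N * q ^ ((n - 1) ^ 2) = q ^ (n ^ 2 - n) * q ^ (N + 1 - n) := by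
      rw [← zpow_add₀ h0, ← zpow_add₀ h0]; congr 1; ring
    have e3 : (-1 : ℂ) ^ (n - 1) = -(-1 : ℂ) ^ n := by
      rw [zpow_sub₀ (by norm_num), zpow_one, div_neg, div_one]
    rw [e3]
    linear_combination (-1 : ℂ) ^ n * coeff q (N + 1 - n) * (e1 + e2)
      + (-1 : ℂ) ^ n * q ^ (n ^ 2 - n) * hc
  have h := (s3.congr_fun fun n => (e n).symm).tsum_eq
  rw [tsum_alternating_eq_zero] at h
  change 0 = q ^ (-(N + 1)) * convCoeff q (N + 1) + -q ^ N * convCoeff q N at h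
  have e4 : q ^ (N + 1) * q ^ (-(N + 1)) = 1 := by rw [← zpow_add₀ h0]; simp
  have e5 : q ^ (N + 1) * q ^ N = q ^ (2 * N + 1) := by
    rw [← zpow_add₀ h0]; congr 1; ring
  linear_combination (-q ^ (N + 1)) * h - convCoeff q (N + 1) * e4 + convCoeff q N * e5

lemma conv_eq {q : ℂ} (h0 : q ≠ 0) (hq : ‖q‖ < 1) (N : ℤ) :
    convCoeff q N = q ^ (N.natAbs ^ 2) * convCoeff q 0 := by
  rw [sq_pow_eq]
  induction N using Int.induction_on with
  | zero => simp
  | succ k ih =>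
    rw [conv_succ h0 hq, ih, ← mul_assoc, ← zpow_add₀ h0]
    congr 2; ring
  | pred k ih =>
    have h := conv_succ h0 hq (-(k : ℤ) - 1)
    rw [sub_add_cancel, ih] at h
    have h2 : q ^ (2 * (-(k : ℤ) - 1) + 1) ≠ 0 := zpow_ne_zero _ h0
    apply mul_left_cancel₀ h2
    rw [← h, ← mul_assoc, ← zpow_add₀ h0]
    congr 2; ring

/-- Every coefficient of the product is `q ^ (N²)` times the one with `N = 0`, so the product is again
a multiple of a theta series. -/
lemma theta_mul_lam {w q : ℂ} (hw : ‖w‖ = 1) (h0 : q ≠ 0) (hq : ‖q‖ < 1) :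
    theta (-w) q * lam w q = theta w q * convCoeff q 0 := by
  have w0 : w ≠ 0 := norm_pos_iff.mp (by rw [hw]; exact one_pos)
  have sθ := summable_norm_theta (w := -w) (by rwa [norm_neg]) hq
  have sl := summable_norm_lam hw hq
  let e : ℤ × ℤ ≃ ℤ × ℤ :=
    { toFun := fun z => (z.2, z.1 - z.2)
      invFun := fun z => (z.1 + z.2, z.1)
      left_inv := fun z => by simp
      right_inv := fun z => by simp }
  have sp := e.summable_iff.mpr (summable_mul_of_summable_norm sθ sl)
  have hp := tsum_mul_tsum_of_summable_norm sθ sl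
  rw [← e.tsum_eq] at hp
  refine hp.trans ((Summable.tsum_prod sp).trans ?_)
  rw [theta, ← tsum_mul_right]
  refine tsum_congr fun N => ?_
  rw [mul_assoc, ← conv_eq h0 hq, convCoeff, ← tsum_mul_left]
  refine tsum_congr fun n => ?_
  change (-w) ^ n * q ^ (n.natAbs ^ 2) * (w ^ (N - n) * coeff q (N - n)) = _
  have : w ^ n * w ^ (N - n) = w ^ N := by rw [← zpow_add₀ w0]; congr 1; ring
  rw [← this, ← neg_one_mul w, mul_zpow]
  ring

/-! ### Passing from `q` to `-q²` -/

/-- If a bijection preserves the terms indexed by the range of `g` and changes the sign of all the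
others, then the others cancel and only the sum over the range of `g` is left. -/
lemma tsum_eq_of_antisymm {α β : Type*} {f : α → ℂ} (hf : Summable f) (e : α ≃ α) {g : β → α}
    (hg : Function.Injective g) (h1 : ∀ b, f (e (g b)) = f (g b))
    (h2 : ∀ a, a ∉ Set.range g → f (e a) = -f a) : ∑' a, f a = ∑' b, f (g b) := by
  have hs : ∑' a, f a = ∑' a, (f a + f (e a)) / 2 := by
    rw [tsum_div_const, hf.tsum_add (g := fun a => f (e a)) (e.summable_iff.mpr hf), e.tsum_eq f]; ring
  rw [hs, ← hg.tsum_eq]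
  · exact tsum_congr fun b => by rw [h1]; ring
  · intro a ha
    by_contra hr
    exact ha (by simp [h2 a hr])

lemma I_zpow_neg_of_odd {n : ℤ} (hn : n ∉ Set.range fun k : ℤ => 2 * k) :
    Complex.I ^ (-n) = -Complex.I ^ n := by
  rcases Int.even_or_odd' n with ⟨k, rfl | rfl⟩
  · exact absurd ⟨k, rfl⟩ hn
  · rw [zpow_neg, zpow_add₀ Complex.I_ne_zero, zpow_mul, zpow_one]
    have : (Complex.I ^ (2 : ℤ)) = -1 := by exact_mod_cast Complex.I_sq
    rw [this, mul_inv, Complex.inv_I, ← inv_zpow]; norm_num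

lemma I_zpow_two_mul (k : ℤ) : Complex.I ^ (2 * k) = (-1) ^ k := by
  rw [zpow_mul]
  congr 1
  exact_mod_cast Complex.I_sq

lemma neg_one_zpow_neg (k : ℤ) : (-1 : ℂ) ^ (-k) = (-1) ^ k := by
  rw [zpow_neg, ← inv_zpow]; norm_num

lemma neg_one_zpow_natAbs (k : ℤ) : (-1 : ℂ) ^ k.natAbs = (-1) ^ k := by
  obtain ⟨m, rfl | rfl⟩ := k.eq_nat_or_neg
  · simp
  · rw [neg_one_zpow_neg]; simp

lemma neg_one_pow_sq (k : ℤ) : (-1 : ℂ) ^ (k.natAbs ^ 2) = (-1) ^ k := by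
  rw [← neg_one_zpow_natAbs]
  rcases Nat.even_or_odd k.natAbs with h | h
  · rw [h.neg_one_pow, (h.pow_of_ne_zero two_ne_zero).neg_one_pow]
  · rw [h.neg_one_pow, (h.pow).neg_one_pow]

lemma theta_neg_one (q : ℂ) : theta (-1) q = theta 1 (-q) :=
  tsum_congr fun n => by rw [neg_pow q, neg_one_pow_sq, one_zpow, one_mul]

lemma injective_two_mul : Function.Injective fun k : ℤ => 2 * k :=
  fun a b h => by simpa using h

lemma theta_I {q : ℂ} (hq : ‖q‖ < 1) : theta Complex.I q = theta 1 (-q ^ 4) := by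
  rw [theta, tsum_eq_of_antisymm (summable_norm_theta (by simp) hq).of_norm (Equiv.neg ℤ)
    injective_two_mul]
  · refine tsum_congr fun n => ?_
    rw [I_zpow_two_mul, neg_pow (q ^ 4), neg_one_pow_sq, one_zpow, one_mul, Int.natAbs_mul,
      ← pow_mul]
    congr 2
    simp only [Int.reduceAbs]; ring
  · intro k
    simp only [Equiv.neg_apply, Int.natAbs_neg]
    rw [← mul_neg, I_zpow_two_mul, I_zpow_two_mul, neg_one_zpow_neg]
  · intro n hn
    simp only [Equiv.neg_apply, Int.natAbs_neg, I_zpow_neg_of_odd hn, neg_mul]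

lemma theta_neg_I (q : ℂ) : theta (-Complex.I) q = theta Complex.I q := by
  rw [theta, ← (Equiv.neg ℤ).tsum_eq]
  refine tsum_congr fun n => ?_
  rw [Equiv.neg_apply, Int.natAbs_neg, zpow_neg, ← inv_zpow, inv_neg, Complex.inv_I, neg_neg]

lemma lam_I {q : ℂ} (hq : ‖q‖ < 1) : lam Complex.I q = lam 1 (-q ^ 2) := by
  rw [lam, tsum_eq_of_antisymm (summable_norm_lam (by simp) hq).of_norm (Equiv.neg ℤ)
    injective_two_mul]
  · refine tsum_congr fun n => ?_
    rw [I_zpow_two_mul, one_zpow, one_mul, coeff, coeff, neg_pow (q ^ 2), neg_one_zpow_natAbs,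
      neg_pow (q ^ 2), (even_two_mul _).neg_one_pow, Int.natAbs_mul, ← pow_mul, ← pow_mul, one_mul,
      mul_div_assoc, show 2 * (2 * n.natAbs) = 2 * ((2 : ℤ).natAbs * n.natAbs) from rfl]
    rfl
  · intro k
    simp only [Equiv.neg_apply, coeff_neg]
    rw [← mul_neg, I_zpow_two_mul, I_zpow_two_mul, neg_one_zpow_neg]
  · intro n hn
    simp only [Equiv.neg_apply, coeff_neg, I_zpow_neg_of_odd hn, neg_mul]

/-- In the double series `∑ (-1)ⁿ q^(m² + n²)` the terms with `m + n` odd cancel under exchanging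
`m` and `n`; the others are parametrised by `m = a + b`, `n = a - b`. -/
lemma theta_mul_theta_neg {q : ℂ} (hq : ‖q‖ < 1) :
    theta 1 q * theta 1 (-q) = theta 1 (-q ^ 2) ^ 2 := by
  have s1 := summable_norm_theta (w := 1) (by simp) hq
  have s2 := summable_norm_theta (w := -1) (by simp) hq
  have hq2 : ‖-q ^ 2‖ < 1 := by
    rw [norm_neg, norm_pow]; exact pow_lt_one₀ (norm_nonneg q) hq two_ne_zero
  have s3 := summable_norm_theta (w := 1) (by simp) hq2
  rw [← theta_neg_one, theta, theta, tsum_mul_tsum_of_summable_norm s1 s2, sq, theta,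
    tsum_mul_tsum_of_summable_norm s3 s3, tsum_eq_of_antisymm
      (summable_mul_of_summable_norm s1 s2) (Equiv.prodComm ℤ ℤ)
      (g := fun z : ℤ × ℤ => (z.1 + z.2, z.1 - z.2))]
  · refine tsum_congr fun ⟨a, b⟩ => ?_
    rcases eq_or_ne q 0 with rfl | h0
    · by_cases ha : a = 0
      · subst ha
        by_cases hb : b = 0
        · subst hb; simp
        · simp [hb]
      · by_cases hb : a + b = 0
        · have : a - b ≠ 0 := by omega
          simp [ha, this]
        · simp [ha, hb]
    · simp only [one_zpow, one_mul]
      rw [neg_pow (q ^ 2), neg_pow (q ^ 2), neg_one_pow_sq, neg_one_pow_sq]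
      have e1 : (-1 : ℂ) ^ (a - b) = (-1) ^ a * (-1) ^ b := by
        rw [sub_eq_add_neg, zpow_add₀ (by norm_num), neg_one_zpow_neg]
      have e2 : q ^ ((a + b).natAbs ^ 2) * q ^ ((a - b).natAbs ^ 2)
          = (q ^ 2) ^ (a.natAbs ^ 2) * (q ^ 2) ^ (b.natAbs ^ 2) := by
        rw [← pow_add, ← pow_mul, ← pow_mul, ← pow_add]
        congr 1
        zify
        simp only [sq_abs]; ring
      rw [e1]
      linear_combination (-1 : ℂ) ^ a * (-1) ^ b * e2
  · rintro ⟨a, b⟩ ⟨c, d⟩ h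
    simp only [Prod.mk.injEq] at h
    ext <;> simp <;> omega
  · rintro ⟨a, b⟩
    simp only [Equiv.prodComm_apply, Prod.swap, one_zpow, one_mul]
    have e1 : (-1 : ℂ) ^ (a - b) = (-1) ^ (a + b) := by
      rw [sub_eq_add_neg, zpow_add₀ (by norm_num), neg_one_zpow_neg, zpow_add₀ (by norm_num)]
    rw [e1]; ring
  · rintro ⟨m, n⟩ hmn
    have hodd : Odd (n + m) := by
      rw [← Int.not_even_iff_odd]
      rintro ⟨a, ha⟩
      exact hmn ⟨(a, m - a), by ext <;> simp; omega⟩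
    simp only [Equiv.prodComm_apply, Prod.swap, one_zpow, one_mul]
    have e1 : (-1 : ℂ) ^ n * (-1) ^ m = -1 := by
      rw [← zpow_add₀ (by norm_num), hodd.neg_one_zpow]
    have e2 : (-1 : ℂ) ^ n * (-1) ^ n = 1 := by rw [← mul_zpow]; simp
    linear_combination q ^ (m.natAbs ^ 2) * q ^ (n.natAbs ^ 2) * ((-1) ^ n * e1 - (-1) ^ m * e2)

/-! ### Iteration towards `q = 0` -/

/-- The orbit of `q` under `x ↦ -x²`. -/
noncomputable def orbit (q : ℂ) : ℕ → ℂ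
  | 0 => q
  | k + 1 => -orbit q k ^ 2

lemma norm_orbit_le {q : ℂ} (hq : ‖q‖ < 1) (k : ℕ) : ‖orbit q k‖ ≤ ‖q‖ ^ (k + 1) := by
  induction k with
  | zero => simp [orbit]
  | succ k ih =>
    rw [orbit, norm_neg, norm_pow]
    calc ‖orbit q k‖ ^ 2 ≤ (‖q‖ ^ (k + 1)) ^ 2 := by gcongr
      _ = ‖q‖ ^ ((k + 1) * 2) := by rw [pow_mul]
      _ ≤ ‖q‖ ^ (k + 1 + 1) := pow_le_pow_of_le_one (norm_nonneg q) hq.le (by omega)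

lemma norm_orbit_lt {q : ℂ} (hq : ‖q‖ < 1) (k : ℕ) : ‖orbit q k‖ < 1 :=
  (norm_orbit_le hq k).trans_lt (pow_lt_one₀ (norm_nonneg q) hq (by omega))

lemma orbit_ne_zero {q : ℂ} (h0 : q ≠ 0) (k : ℕ) : orbit q k ≠ 0 := by
  induction k with
  | zero => exact h0
  | succ k ih => exact neg_ne_zero.mpr (pow_ne_zero _ ih)

lemma tendsto_orbit {q : ℂ} (hq : ‖q‖ < 1) :
    Filter.Tendsto (orbit q) Filter.atTop (nhds 0) :=
  squeeze_zero_norm (norm_orbit_le hq)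
    ((tendsto_pow_atTop_nhds_zero_of_lt_one (norm_nonneg q) hq).comp (Filter.tendsto_add_atTop_nat 1))

lemma tendsto_theta : Filter.Tendsto (theta 1) (nhds 0) (nhds 1) := by
  have h : ContinuousOn (theta 1) (Metric.closedBall 0 (1 / 2)) := by
    refine continuousOn_tsum (fun n => by fun_prop)
      (summable_pow_natAbs (r := 1 / 2) (by norm_num) (by norm_num)) fun n x hx => ?_
    rw [one_zpow, one_mul]
    exact norm_sq_pow_le (by simpa using hx) (by norm_num) n
  have h2 := (h.continuousAt (Metric.closedBall_mem_nhds 0 (by norm_num))).tendsto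
  have h3 : theta 1 0 = 1 := by
    rw [theta, tsum_eq_single 0 (fun n hn => by simp [hn])]; simp
  rwa [h3] at h2

lemma tendsto_lam : Filter.Tendsto (lam 1) (nhds 0) (nhds (1 / 2)) := by
  have h : ContinuousOn (lam 1) (Metric.closedBall 0 (1 / 2)) := by
    refine continuousOn_tsum (fun n => ?_)
      ((summable_pow_natAbs (r := 1 / 2) (by norm_num) (by norm_num)).div_const (1 - 1 / 2))
      fun n x hx => ?_
    · refine continuousOn_const.mul (ContinuousOn.div (by fun_prop) (by fun_prop) fun x hx => ?_)
      refine one_add_pow_ne_zero (lt_of_le_of_lt (b := 1 / 2) (by simpa using hx) (by norm_num)) _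
    · rw [one_zpow, one_mul]
      exact norm_coeff_le (by simpa using hx) (by norm_num) n
  have h2 := (h.continuousAt (Metric.closedBall_mem_nhds 0 (by norm_num))).tendsto
  have h3 : lam 1 0 = 1 / 2 := by
    rw [lam, tsum_eq_single 0 (fun n hn => by simp [hn, coeff])]; norm_num [coeff]
  rwa [h3] at h2

/-- A zero would propagate along the orbit `x ↦ -x²` by `theta_mul_theta_neg`, although
`theta 1 x → 1` as `x → 0`. -/
lemma theta_ne_zero {q : ℂ} (hq : ‖q‖ < 1) : theta 1 q ≠ 0 := by
  intro h
  have hk (k : ℕ) : theta 1 (orbit q k) = 0 := by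
    induction k with
    | zero => exact h
    | succ k ih =>
      have := theta_mul_theta_neg (norm_orbit_lt hq k)
      rw [ih, zero_mul] at this
      exact pow_eq_zero_iff two_ne_zero |>.mp this.symm
  have ht := tendsto_theta.comp (tendsto_orbit hq)
  have h0 : theta 1 ∘ orbit q = fun _ => 0 := funext hk
  rw [h0] at ht
  exact zero_ne_one (tendsto_nhds_unique tendsto_const_nhds ht)

/-- The case `w = i` of `theta_mul_lam`: the two theta series coincide and can be cancelled. -/
lemma conv_zero {q : ℂ} (h0 : q ≠ 0) (hq : ‖q‖ < 1) : convCoeff q 0 = lam 1 (-q ^ 2) := by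
  have h := theta_mul_lam (w := Complex.I) (by simp) h0 hq
  have h4 : ‖-q ^ 4‖ < 1 := by
    rw [norm_neg, norm_pow]; exact pow_lt_one₀ (norm_nonneg q) hq (by norm_num)
  rw [theta_neg_I, theta_I hq, lam_I hq] at h
  exact (mul_left_cancel₀ (theta_ne_zero h4) h).symm

/-- The case `w = 1` of `theta_mul_lam`, rewritten with `theta_mul_theta_neg`. -/
lemma ratio_eq {q : ℂ} (h0 : q ≠ 0) (hq : ‖q‖ < 1) :
    lam 1 q / theta 1 q ^ 2 = lam 1 (-q ^ 2) / theta 1 (-q ^ 2) ^ 2 := by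
  have h := theta_mul_lam (w := 1) (by simp) h0 hq
  have hn : ‖-q‖ < 1 := by rwa [norm_neg]
  have t1 := theta_ne_zero hq
  have t2 := theta_ne_zero hn
  rw [conv_zero h0 hq, theta_neg_one] at h
  rw [← theta_mul_theta_neg hq, div_eq_div_iff (pow_ne_zero _ t1) (mul_ne_zero t1 t2)]
  linear_combination theta 1 q * h

lemma theta_sq {q : ℂ} (h0 : q ≠ 0) (hq : ‖q‖ < 1) : theta 1 q ^ 2 = 2 * lam 1 q := by
  have hk (k : ℕ) : lam 1 (orbit q k) / theta 1 (orbit q k) ^ 2 = lam 1 q / theta 1 q ^ 2 := by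
    induction k with
    | zero => rfl
    | succ k ih => rw [← ih, ratio_eq (orbit_ne_zero h0 k) (norm_orbit_lt hq k), orbit]
  have ht := (tendsto_lam.comp (tendsto_orbit hq)).div
    ((tendsto_theta.comp (tendsto_orbit hq)).pow 2) (by norm_num)
  have h1 := tendsto_nhds_unique (tendsto_const_nhds.congr fun k => (hk k).symm) ht
  have t1 := theta_ne_zero hq
  field_simp at h1
  linear_combination -h1

/-! ### The Lambert series -/

/-- The expansion `x / (1 + x²) = (x - x³) / (1 - x⁴)` at `x = q ^ (m + 1)`. -/
lemma coeff_eq_tsum {q : ℂ} (hq : ‖q‖ < 1) (m : ℕ) :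
    coeff q (m + 1 : ℕ)
      = ∑' k : ℕ, (q ^ ((m + 1) * (4 * k + 1)) - q ^ ((m + 1) * (4 * k + 3))) := by
  have hx4 : ‖(q ^ (m + 1)) ^ 4‖ < 1 := by
    rw [← pow_mul, norm_pow]; exact pow_lt_one₀ (norm_nonneg q) hq (by omega)
  have h1 := one_add_pow_ne_zero hq (m + 1)
  have h2 : 1 - (q ^ (m + 1)) ^ 4 ≠ 0 := fun h => by
    rw [← sub_eq_zero.mp h, norm_one] at hx4
    exact lt_irrefl _ hx4
  have e (k : ℕ) : q ^ ((m + 1) * (4 * k + 1)) - q ^ ((m + 1) * (4 * k + 3))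
      = (q ^ (m + 1) - (q ^ (m + 1)) ^ 3) * ((q ^ (m + 1)) ^ 4) ^ k := by
    simp only [pow_mul, pow_add]; ring
  simp only [e]
  rw [tsum_mul_left, tsum_geometric_of_norm_lt_one hx4, coeff, Int.natAbs_natCast]
  rw [mul_comm 2, pow_mul] at h1 ⊢
  rw [← div_eq_mul_inv, div_eq_div_iff h1 h2]
  ring

lemma tsum_pow_succ_mul {q : ℂ} (hq : ‖q‖ < 1) {a : ℕ} (ha : a ≠ 0) :
    HasSum (fun m : ℕ => q ^ ((m + 1) * a)) (q ^ a / (1 - q ^ a)) := by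
  have hx : ‖q ^ a‖ < 1 := by rw [norm_pow]; exact pow_lt_one₀ (norm_nonneg q) hq ha
  have := (hasSum_geometric_of_norm_lt_one hx).mul_left (q ^ a)
  rw [← div_eq_mul_inv] at this
  refine this.congr_fun fun m => ?_
  rw [← pow_mul, ← pow_add]; congr 1; ring

lemma two_mul_lam {q : ℂ} (hq : ‖q‖ < 1) :
    2 * lam 1 q = 1 + 4 * ∑' n : ℕ,
      (q ^ (4 * n + 1) / (1 - q ^ (4 * n + 1)) - q ^ (4 * n + 3) / (1 - q ^ (4 * n + 3))) := by
  have hs : Summable (coeff q) := by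
    simpa using (summable_norm_lam (w := 1) (by simp) hq).of_norm
  have hg := summable_geometric_of_lt_one (norm_nonneg q) hq
  have hb (a : ℕ) (ha : 0 < a) :
      Summable fun z : ℕ × ℕ => q ^ ((z.1 + 1) * (4 * z.2 + a)) := by
    refine Summable.of_norm_bounded (hg.mul_of_nonneg hg (fun _ => by positivity)
      (fun _ => by positivity)) fun z => ?_
    rw [norm_pow, ← pow_add]
    exact pow_le_pow_of_le_one (norm_nonneg q) hq.le (by nlinarith [Nat.zero_le (z.1 * z.2)])
  have hd : ∑' m : ℕ, coeff q (m + 1 : ℕ) = ∑' n : ℕ,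
      (q ^ (4 * n + 1) / (1 - q ^ (4 * n + 1)) - q ^ (4 * n + 3) / (1 - q ^ (4 * n + 3))) := by
    simp only [coeff_eq_tsum hq]
    rw [← Summable.tsum_comm (f := fun m k : ℕ =>
      q ^ ((m + 1) * (4 * k + 1)) - q ^ ((m + 1) * (4 * k + 3)))
      ((hb 1 one_pos).sub (hb 3 (by norm_num)))]
    exact tsum_congr fun k =>
      ((tsum_pow_succ_mul hq (by omega)).sub (tsum_pow_succ_mul hq (by omega))).tsum_eq
  have hl : lam 1 q = ∑' n : ℤ, coeff q n := by simp [lam]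
  rw [hl, tsum_int_eq_zero_add_two_mul_tsum_pnat (coeff_neg q) hs,
    tsum_pnat_eq_tsum_succ (f := fun n : ℕ => coeff q n), hd]
  norm_num [coeff]
  ring

theorem stmt_14 (q : ℝ) (hq0 : 0 < q) (hq1 : q < 1) :
    (∑' n : ℤ, q ^ ((n ^ 2 : ℤ))) ^ 2
      = 1 + 4 * ∑' n : ℕ,
          (q ^ (4 * n + 1) / (1 - q ^ (4 * n + 1))
            - q ^ (4 * n + 3) / (1 - q ^ (4 * n + 3))) := by
  have h0 : (q : ℂ) ≠ 0 := by exact_mod_cast hq0.ne'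
  have h1 : ‖(q : ℂ)‖ < 1 := by simpa [abs_of_pos hq0] using hq1
  have h := (theta_sq h0 h1).trans (two_mul_lam h1)
  simp only [theta, one_zpow, one_mul, sq_pow_eq] at h
  exact_mod_cast h
end

section
/- Let $\psi(q) = \sum_{n=0}^{\infty} q^{n(n+1)/2}$ for $0<q<1$. Then $q\,\frac{\psi(q^3)^3}{\psi(q)} = \sum_{n=1}^{\infty}\frac{q^{3n-2}}{1-q^{6n-4}} - \sum_{n=1}^{\infty}\frac{q^{3n-1}}{1-q^{6n-2}}$. -/
/-!
Write `(a; p)_n` for the finite product `∏_{i < n} (1 - a p ^ i)`. The right-hand side is the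
bilateral series `∑_{n ∈ ℤ} q ^ (3 n + 1) / (1 - q ^ (6 n + 2))`, the terms with `n < 0` being
folded onto `-(n + 1)`. It is the case `x = q ^ 3`, `y = q ^ 2`, `p = q ^ 6` of Kronecker's identity
`∑_{n ∈ ℤ} x ^ n / (1 - y p ^ n)
  = (p; p)² (x y; p) (p / (x y); p) / ((x; p) (p / x; p) (y; p) (p / y; p))`.

Kronecker's identity is the limit of a finite partial fraction expansion in `y`. Only the case
`p = x ^ 2` is needed, where `x = p / x` makes the coefficients symmetric: this is
`finite_kronecker`, proved by induction on the number of poles. Substituting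
`y = q ^ 2 q ^ (-6 (N + 1))` centres the poles and gives `finite_lambert`.

Gauss's product `ψ(r) = (r²; r²)² / (r; r)` is obtained in the same way, as the limit of the finite
Jacobi triple product (`finite_gauss`), which is the `q`-binomial theorem `qbinomial` with
`2 N + 1` factors, centred at `z = r ^ (-N)`.

In both cases the finite sums have the shape `∑_{n ≤ N} f n * (a (N + 1 + n) * a (N - n))` with
`f` summable and `a` convergent, so dominated convergence (`tendsto_sum_mul_mul`) gives the limit.
Splitting all the products modulo `6` then reduces the theorem to an identity between monomials in
the six limits `(q ^ c; q ^ 6)_∞`, `1 ≤ c ≤ 6`.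
-/

open Filter Topology Finset

/-! ### Finite products and dominated convergence -/

/-- The finite `q`-Pochhammer symbol `(a; p)_n`. -/
def qPoch (a p : ℝ) (n : ℕ) : ℝ := ∏ i ∈ range n, (1 - a * p ^ i)

lemma qPoch_succ (a p : ℝ) (n : ℕ) : qPoch a p (n + 1) = qPoch a p n * (1 - a * p ^ n) :=
  prod_range_succ _ _

@[simp] lemma qPoch_zero (a p : ℝ) : qPoch a p 0 = 1 := by simp [qPoch]

lemma one_sub_mul_pow_pos {a p : ℝ} (ha0 : 0 < a) (ha1 : a < 1) (hp0 : 0 < p) (hp1 : p < 1)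
    (n : ℕ) : 0 < 1 - a * p ^ n := by
  have h := pow_le_one₀ hp0.le hp1.le (n := n)
  nlinarith

lemma qPoch_pos {a p : ℝ} (ha0 : 0 < a) (ha1 : a < 1) (hp0 : 0 < p) (hp1 : p < 1) (n : ℕ) :
    0 < qPoch a p n :=
  prod_pos fun i _ => one_sub_mul_pow_pos ha0 ha1 hp0 hp1 i

lemma exists_tendsto_qPoch {a p : ℝ} (ha0 : 0 < a) (ha1 : a < 1) (hp0 : 0 < p) (hp1 : p < 1) :
    ∃ l, 0 < l ∧ Tendsto (qPoch a p) atTop (𝓝 l) := by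
  have hs : Summable fun i : ℕ => -(a * p ^ i) :=
    ((summable_geometric_of_lt_one hp0.le hp1).mul_left a).neg
  have hl : Summable fun i : ℕ => Real.log (1 + -(a * p ^ i)) :=
    Real.summable_log_one_add_of_summable hs
  refine ⟨_, Real.exp_pos (∑' i : ℕ, Real.log (1 + -(a * p ^ i))), ?_⟩
  refine ((Real.continuous_exp.tendsto _).comp hl.hasSum.tendsto_sum_nat).congr fun n => ?_
  simp only [Function.comp, Real.exp_sum, qPoch]
  refine prod_congr rfl fun i _ => ?_
  rw [← sub_eq_add_neg, Real.exp_log (one_sub_mul_pow_pos ha0 ha1 hp0 hp1 i)]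

/-- The terms with `n > N` are absent from the sum, so the truncated `N - n` never matters. -/
lemma tendsto_sum_mul_mul {f a : ℕ → ℝ} {α : ℝ} (hf : Summable f) (ha : Tendsto a atTop (𝓝 α)) :
    Tendsto (fun N => ∑ n ∈ range (N + 1), f n * (a (N + 1 + n) * a (N - n))) atTop
      (𝓝 ((∑' n, f n) * α ^ 2)) := by
  obtain ⟨B, hB⟩ := ha.abs.bddAbove_range
  have hB' : ∀ n, |a n| ≤ B := fun n => hB ⟨n, rfl⟩
  have hB0 : 0 ≤ B := (abs_nonneg _).trans (hB' 0)
  have key : Tendsto (fun N => ∑' n, (range (N + 1) : Set ℕ).indicator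
      (fun n => f n * (a (N + 1 + n) * a (N - n))) n) atTop (𝓝 (∑' n, f n * α ^ 2)) := by
    refine tendsto_tsum_of_dominated_convergence (bound := fun n => |f n| * B ^ 2)
      (hf.abs.mul_right _) (fun n => ?_) (Eventually.of_forall fun N n => ?_)
    · have h1 : Tendsto (fun N => a (N + 1 + n)) atTop (𝓝 α) :=
        ha.comp (tendsto_atTop_mono (fun N => by simp only [id]; omega) tendsto_id)
      have h2 : Tendsto (fun N => a (N - n)) atTop (𝓝 α) := ha.comp (tendsto_sub_atTop_nat n)
      rw [sq]
      refine ((h1.mul h2).const_mul (f n)).congr' ?_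
      filter_upwards [eventually_ge_atTop n] with N hN
      rw [Set.indicator_of_mem]
      simp; omega
    · refine (norm_indicator_le_norm_self _ _).trans ?_
      rw [Real.norm_eq_abs, abs_mul, abs_mul, sq]
      gcongr <;> exact hB' _
  rw [← tsum_mul_right]
  refine key.congr fun N => ?_
  rw [tsum_eq_sum (s := range (N + 1))]
  · refine sum_congr rfl fun n hn => ?_
    rw [Set.indicator_of_mem (by simpa using hn)]
  · intro n hn
    rw [Set.indicator_of_notMem (by simpa using hn)]

/-! ### Finite Gauss identity -/

/-- The `q`-binomial theorem, divided by `(r; r)_M` so that the coefficients are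
`1 / ((r; r)_k (r; r)_(M - k))`. -/
lemma qbinomial {r : ℝ} (hr0 : 0 < r) (hr1 : r < 1) (z : ℝ) (M : ℕ) :
    ∑ k ∈ range (M + 1), r ^ k.choose 2 * z ^ k * ((qPoch r r k)⁻¹ * (qPoch r r (M - k))⁻¹)
      = (∏ i ∈ range M, (1 + z * r ^ i)) * (qPoch r r M)⁻¹ := by
  induction M with
  | zero => simp
  | succ M ih =>
    have hne : ∀ n : ℕ, 1 - r * r ^ n ≠ 0 := fun n =>
      (one_sub_mul_pow_pos hr0 hr1 hr0 hr1 n).ne'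
    have hP : ∀ n, qPoch r r n ≠ 0 := fun n => ne_of_gt (qPoch_pos hr0 hr1 hr0 hr1 n)
    -- `1 - r ^ (M + 1) = (1 - r ^ (M + 1 - k)) + r ^ (M + 1 - k) (1 - r ^ k)`: each part cancels
    -- the last factor of one of the two denominators, which is the `q`-Pascal rule.
    have hsplit : ∀ k ∈ range (M + 2), (1 - r * r ^ M) *
        (r ^ k.choose 2 * z ^ k * ((qPoch r r k)⁻¹ * (qPoch r r (M + 1 - k))⁻¹))
        = (1 - r ^ (M + 1 - k)) *
            (r ^ k.choose 2 * z ^ k * ((qPoch r r k)⁻¹ * (qPoch r r (M + 1 - k))⁻¹))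
          + r ^ (M + 1 - k) * (1 - r ^ k) *
            (r ^ k.choose 2 * z ^ k * ((qPoch r r k)⁻¹ * (qPoch r r (M + 1 - k))⁻¹)) := by
      intro k hk
      have : r * r ^ M = r ^ (M + 1 - k) * r ^ k := by
        rw [← pow_add, ← pow_succ']
        congr 1
        simp at hk; omega
      rw [this]; ring
    have main : (1 - r * r ^ M) * ∑ k ∈ range (M + 2),
        r ^ k.choose 2 * z ^ k * ((qPoch r r k)⁻¹ * (qPoch r r (M + 1 - k))⁻¹)
        = (1 + z * r ^ M) * ∑ k ∈ range (M + 1),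
        r ^ k.choose 2 * z ^ k * ((qPoch r r k)⁻¹ * (qPoch r r (M - k))⁻¹) := by
      rw [mul_sum, sum_congr rfl hsplit, sum_add_distrib, sum_range_succ, sum_range_succ' _ (M + 1)]
      simp only [Nat.sub_self, pow_zero, sub_self, zero_mul, mul_zero, add_zero]
      rw [add_mul, one_mul, mul_sum]
      congr 1
      · refine sum_congr rfl fun k hk => ?_
        have hk' : M + 1 - k = (M - k) + 1 := by simp at hk; omega
        rw [hk', qPoch_succ, pow_succ']
        field_simp [hne (M - k), hP]
      · refine sum_congr rfl fun k hk => ?_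
        have hk' : M + 1 - (k + 1) = M - k := by omega
        have hM : r ^ M = r ^ (M - k) * r ^ k := by
          rw [← pow_add]; congr 1; simp at hk; omega
        have hc : (k + 1).choose 2 = k + k.choose 2 := by
          rw [Nat.choose_succ_succ' k 1, Nat.choose_one_right]
        rw [hk', hM, qPoch_succ, hc, pow_add r k (k.choose 2), pow_succ z, pow_succ' r k]
        have := hne k
        field_simp [hP]
    rw [ih] at main
    have hM := hne M
    rw [prod_range_succ, qPoch_succ]
    rw [← mul_right_inj' (hne M), main]
    have h1 := hP M
    generalize 1 - r * r ^ M = w at *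
    field_simp

/-- The finite form of the Jacobi triple product at `z = 1`: in the centred `q`-binomial sum the
terms of index `N - n` and `N + 1 + n` coincide. -/
lemma finite_gauss {r : ℝ} (hr0 : 0 < r) (hr1 : r < 1) (N : ℕ) :
    ∑ n ∈ range (N + 1), r ^ (n * (n + 1) / 2)
        * ((qPoch r r (N + 1 + n))⁻¹ * (qPoch r r (N - n))⁻¹)
      = (∏ i ∈ range N, (1 + r ^ (i + 1))) ^ 2 * (qPoch r r (2 * N + 1))⁻¹ := by
  have hr : r ≠ 0 := hr0.ne'
  have tri : ∀ n : ℕ, n * (n + 1) / 2 = (n + 1).choose 2 := fun n => by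
    rw [Nat.choose_two_right, mul_comm]; rfl
  have hc : ∀ k : ℕ, (k + 1).choose 2 = k + k.choose 2 := fun k => by
    rw [Nat.choose_succ_succ' k 1, Nat.choose_one_right]
  have h := qbinomial hr0 hr1 ((r ^ N)⁻¹) (2 * N + 1)
  have hprod : ∏ i ∈ range (2 * N + 1), (1 + (r ^ N)⁻¹ * r ^ i)
      = 2 * (r ^ (N + 1).choose 2)⁻¹ * (∏ i ∈ range N, (1 + r ^ (i + 1))) ^ 2 := by
    have h1 : ∏ i ∈ range N, (1 + (r ^ N)⁻¹ * r ^ i)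
        = (r ^ (N + 1).choose 2)⁻¹ * ∏ i ∈ range N, (1 + r ^ (i + 1)) := by
      have : ∀ K : ℕ, (r ^ (K + 1).choose 2)⁻¹ * ∏ i ∈ range K, (1 + r ^ (i + 1))
          = ∏ i ∈ range K, (1 + (r ^ (i + 1))⁻¹) := by
        intro K
        induction K with
        | zero => simp
        | succ K ih =>
          rw [prod_range_succ, prod_range_succ, ← ih, hc (K + 1), pow_add]
          field_simp
          ring
      rw [this, ← prod_range_reflect]
      refine prod_congr rfl fun i hi => ?_
      have : N = (N - 1 - i) + (i + 1) := by simp at hi; omega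
      have h2 : r ^ N = r ^ (N - 1 - i) * r ^ (i + 1) := by rw [← pow_add, ← this]
      rw [h2]; field_simp
    rw [show 2 * N + 1 = N + (N + 1) by ring, prod_range_add, h1, prod_range_succ']
    have h3 : ∀ i, (r ^ N)⁻¹ * r ^ (N + i) = r ^ i := fun i => by rw [pow_add]; field_simp
    simp only [h3, pow_zero]
    ring
  rw [hprod, show 2 * N + 1 + 1 = (N + 1) + (N + 1) by ring, sum_range_add, ← sum_range_reflect] at h
  have e1 : ∀ n ∈ range (N + 1), r ^ (N + 1 - 1 - n).choose 2 * (r ^ N)⁻¹ ^ (N + 1 - 1 - n) *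
      ((qPoch r r (N + 1 - 1 - n))⁻¹ * (qPoch r r (2 * N + 1 - (N + 1 - 1 - n)))⁻¹)
      = (r ^ (N + 1).choose 2)⁻¹ * (r ^ (n * (n + 1) / 2)
        * ((qPoch r r (N + 1 + n))⁻¹ * (qPoch r r (N - n))⁻¹)) := by
    intro n hn
    obtain ⟨m, rfl⟩ : ∃ m, N = m + n := ⟨N - n, by simp at hn; omega⟩
    rw [show m + n + 1 - 1 - n = m by omega, show m + n - n = m by omega,
      show 2 * (m + n) + 1 - m = m + n + 1 + n by omega, tri]
    have e : (m + n + 1).choose 2 + m.choose 2 = (n + 1).choose 2 + (m + n) * m := by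
      have (k : ℕ) : 2 * (k + 1).choose 2 = k * (k + 1) := by
        rw [← tri]; exact Nat.mul_div_cancel' (Nat.even_mul_succ_self k).two_dvd
      have a1 := this (m + n)
      have a2 := this n
      have a3 := this m
      rw [hc m] at a3
      nlinarith
    have e' : r ^ (m + n + 1).choose 2 * r ^ m.choose 2
        = r ^ (n + 1).choose 2 * r ^ ((m + n) * m) := by rw [← pow_add, ← pow_add, e]
    rw [inv_pow, ← pow_mul]
    have : r ^ m.choose 2 * (r ^ ((m + n) * m))⁻¹
        = (r ^ (m + n + 1).choose 2)⁻¹ * r ^ (n + 1).choose 2 := by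
      field_simp
      linarith
    rw [this]; ring
  have e2 : ∀ n ∈ range (N + 1), r ^ (N + 1 + n).choose 2 * (r ^ N)⁻¹ ^ (N + 1 + n) *
      ((qPoch r r (N + 1 + n))⁻¹ * (qPoch r r (2 * N + 1 - (N + 1 + n)))⁻¹)
      = (r ^ (N + 1).choose 2)⁻¹ * (r ^ (n * (n + 1) / 2)
        * ((qPoch r r (N + 1 + n))⁻¹ * (qPoch r r (N - n))⁻¹)) := by
    intro n hn
    rw [show 2 * N + 1 - (N + 1 + n) = N - n by omega, tri]
    have e : (N + 1).choose 2 + (N + 1 + n).choose 2 = (n + 1).choose 2 + N * (N + 1 + n) := by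
      have (k : ℕ) : 2 * (k + 1).choose 2 = k * (k + 1) := by
        rw [← tri]; exact Nat.mul_div_cancel' (Nat.even_mul_succ_self k).two_dvd
      have a1 := this (N + n)
      have a2 := this n
      have a3 := this N
      rw [show N + 1 + n = N + n + 1 by ring]
      nlinarith
    have e' : r ^ (N + 1).choose 2 * r ^ (N + 1 + n).choose 2
        = r ^ (n + 1).choose 2 * r ^ (N * (N + 1 + n)) := by rw [← pow_add, ← pow_add, e]
    rw [inv_pow, ← pow_mul]
    have : r ^ (N + 1 + n).choose 2 * (r ^ (N * (N + 1 + n)))⁻¹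
        = (r ^ (N + 1).choose 2)⁻¹ * r ^ (n + 1).choose 2 := by
      field_simp
      linarith
    rw [this]; ring
  rw [sum_congr rfl e1, sum_congr rfl e2, ← mul_sum] at h
  have h0 : (r ^ (N + 1).choose 2)⁻¹ ≠ 0 := by positivity
  have h2 : (2 * (r ^ (N + 1).choose 2)⁻¹) ≠ 0 := by positivity
  rw [← mul_right_inj' h2]
  linarith

/-! ### Finite Kronecker identity -/

/-- The ratio `(t; t²)_k / (t²; t²)_k`. -/
noncomputable def oddEven (t : ℝ) (k : ℕ) : ℝ := qPoch t (t ^ 2) k / qPoch (t ^ 2) (t ^ 2) k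

/-- The partial fraction expansion in `y` of `∏_{i < M} (1 - y t ^ (2 i + 1))` over
`∏_{i ≤ M} (1 - y t ^ (2 i))`. -/
lemma finite_kronecker {t : ℝ} (ht0 : 0 < t) (ht1 : t < 1) (M : ℕ) (y : ℝ)
    (hy : ∀ k ≤ M, 1 - y * t ^ (2 * k) ≠ 0) :
    ∑ k ∈ range (M + 1), t ^ k / (1 - y * t ^ (2 * k)) *
        (oddEven t k *
          oddEven t (M - k))
      = (∏ i ∈ range M, (1 - y * t ^ (2 * i + 1))) /
          ∏ i ∈ range (M + 1), (1 - y * t ^ (2 * i)) := by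
  have hlt : ∀ n : ℕ, 1 - t ^ (n + 1) ≠ 0 := fun n =>
    (sub_pos.2 (pow_lt_one₀ ht0.le ht1 (by omega))).ne'
  have hCs : ∀ k, oddEven t (k + 1) = oddEven t k * ((1 - t ^ (2 * k + 1)) / (1 - t ^ (2 * k + 2))) := by
    intro k
    simp only [oddEven, qPoch_succ]
    rw [mul_div_mul_comm]
    congr 2 <;> ring
  induction M generalizing y with
  | zero => simp [oddEven]
  | succ M ih =>
    have hyM := hy (M + 1) le_rfl
    -- The induction hypothesis at the new pole `y = t ^ (-2 (M + 1))` gives the new coefficient.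
    have hpole : (1 - t⁻¹) * ∑ k ∈ range (M + 1),
        t ^ k / (1 - (t ^ (2 * M + 2))⁻¹ * t ^ (2 * k)) * (oddEven t k * oddEven t (M - k))
        = t ^ (M + 1) * oddEven t (M + 1) := by
      have h1 : ∀ k ≤ M, 1 - (t ^ (2 * M + 2))⁻¹ * t ^ (2 * k) ≠ 0 := by
        intro k hk
        obtain ⟨m, rfl⟩ := Nat.exists_eq_add_of_le hk
        have h := hlt (2 * m + 1)
        have h2 : 1 - (t ^ (2 * (k + m) + 2))⁻¹ * t ^ (2 * k)
            = - (1 - t ^ (2 * m + 1 + 1)) / t ^ (2 * m + 1 + 1) := by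
          rw [show 2 * (k + m) + 2 = 2 * k + (2 * m + 1 + 1) by ring, pow_add]
          field_simp
          ring
        rw [h2]
        exact div_ne_zero (neg_ne_zero.2 h) (by positivity)
      rw [ih _ h1]
      have hnum : (1 - t⁻¹) * ∏ i ∈ range M, (1 - (t ^ (2 * M + 2))⁻¹ * t ^ (2 * i + 1))
          = ∏ j ∈ range (M + 1), (1 - (t ^ (2 * j + 1))⁻¹) := by
        rw [prod_range_succ', mul_comm]
        simp only [mul_zero, zero_add, pow_one]
        congr 1
        rw [← prod_range_reflect]
        refine prod_congr rfl fun i hi => ?_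
        obtain ⟨m, rfl⟩ : ∃ m, M = m + i + 1 := ⟨M - i - 1, by simp at hi; omega⟩
        rw [show m + i + 1 - 1 - i = m by omega,
          show 2 * (m + i + 1) + 2 = (2 * m + 1) + (2 * (i + 1) + 1) by ring, pow_add t (2 * m + 1)]
        field_simp
      have hden : ∏ i ∈ range (M + 1), (1 - (t ^ (2 * M + 2))⁻¹ * t ^ (2 * i))
          = ∏ j ∈ range (M + 1), (1 - (t ^ (2 * j + 2))⁻¹) := by
        rw [← prod_range_reflect]
        refine prod_congr rfl fun i hi => ?_
        obtain ⟨m, rfl⟩ : ∃ m, M = m + i := ⟨M - i, by simp at hi; omega⟩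
        rw [show m + i + 1 - 1 - i = m by omega,
          show 2 * (m + i) + 2 = (2 * m) + (2 * i + 2) by ring, pow_add t (2 * m)]
        field_simp
      rw [← mul_div_assoc, hnum, hden, ← prod_div_distrib]
      have : ∀ K : ℕ, ∏ j ∈ range K, (1 - (t ^ (2 * j + 1))⁻¹) / (1 - (t ^ (2 * j + 2))⁻¹)
          = t ^ K * oddEven t K := by
        intro K
        induction K with
        | zero => simp [oddEven]
        | succ K ihK =>
          rw [prod_range_succ, ihK, hCs]
          have a1 := hlt (2 * K + 1)
          have a2 : 1 - (t ^ (2 * K + 2))⁻¹ = -(1 - t ^ (2 * K + 1 + 1)) / t ^ (2 * K + 2) := by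
            field_simp; ring
          have a3 : 1 - (t ^ (2 * K + 1))⁻¹ = -(1 - t ^ (2 * K + 1)) / t ^ (2 * K + 1) := by
            field_simp; ring
          rw [a2, a3]
          field_simp
          ring
      exact this _
    -- The extra factor is split into partial fractions: the part at the old pole turns
    -- `oddEven t (M - k)` into `oddEven t (M + 1 - k)`, the other part feeds the new pole.
    have hterm : ∀ k ∈ range (M + 1),
        t ^ k / (1 - y * t ^ (2 * k)) * (oddEven t k * oddEven t (M + 1 - k))
        = (t ^ k / (1 - y * t ^ (2 * k)) * (oddEven t k * oddEven t (M - k))) *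
            ((1 - y * t ^ (2 * M + 1)) / (1 - y * t ^ (2 * (M + 1))))
          - (1 - y * t ^ (2 * (M + 1)))⁻¹ * ((1 - t⁻¹) *
            (t ^ k / (1 - (t ^ (2 * M + 2))⁻¹ * t ^ (2 * k)) * (oddEven t k * oddEven t (M - k)))) := by
      intro k hk
      obtain ⟨m, rfl⟩ : ∃ m, M = k + m := ⟨M - k, by simp at hk; omega⟩
      have b1 := hy k (by omega)
      have b2 := hlt (2 * m + 1)
      have b3 : 1 - (t ^ (2 * (k + m) + 2))⁻¹ * t ^ (2 * k)
            = - (1 - t ^ (2 * m + 1 + 1)) / t ^ (2 * m + 1 + 1) := by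
          rw [show 2 * (k + m) + 2 = 2 * k + (2 * m + 1 + 1) by ring, pow_add]
          field_simp
          ring
      rw [show k + m + 1 - k = m + 1 by omega, show k + m - k = m by omega, hCs, b3]
      have b4 : t ^ (2 * (k + m + 1)) = t ^ (2 * k) * t ^ (2 * m + 1) * t := by ring
      have b5 : t ^ (2 * (k + m) + 1) = t ^ (2 * k) * t ^ (2 * m + 1) := by ring
      rw [b4] at hyM
      have b7 : t ^ (2 * m + 1 + 1) = t ^ (2 * m + 1) * t := by ring
      rw [b7] at b2
      rw [b4, b5, b7]
      generalize t ^ (2 * m + 1) = w at *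
      generalize t ^ (2 * k) = u at *
      generalize hD : 1 - y * (u * w * t) = D at *
      field_simp
      rw [← hD]
      ring
    rw [sum_range_succ, sum_congr rfl hterm, sum_sub_distrib, ← sum_mul, ← mul_sum, ← mul_sum,
      hpole, ih y (fun k hk => hy k (by omega)), 
      prod_range_succ (fun i => 1 - y * t ^ (2 * i + 1)) M, prod_range_succ _ (M + 1)]
    have : oddEven t 0 = 1 := by simp [oddEven]
    rw [Nat.sub_self, this, ← div_mul_div_comm]
    ring

/-- `finite_kronecker` with `t = q ^ 3` and centred poles; the terms of index `N + 1 + n` and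
`N - n` of that sum have the same coefficient and are grouped together. -/
lemma finite_lambert {q : ℝ} (hq0 : 0 < q) (hq1 : q < 1) (N : ℕ) :
    ∑ n ∈ range (N + 1), (q ^ (3 * n + 1) / (1 - q ^ (6 * n + 2))
        - q ^ (3 * n + 2) / (1 - q ^ (6 * n + 4)))
        * (oddEven (q ^ 3) (N + 1 + n) * oddEven (q ^ 3) (N - n))
      = q * (qPoch (q ^ 1) (q ^ 6) (N + 1) * qPoch (q ^ 5) (q ^ 6) N) /
          (qPoch (q ^ 2) (q ^ 6) (N + 1) * qPoch (q ^ 4) (q ^ 6) (N + 1)) := by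
  have hlt : ∀ n : ℕ, n ≠ 0 → 1 - q ^ n ≠ 0 := fun n hn =>
    (sub_pos.2 (pow_lt_one₀ hq0.le hq1 hn)).ne'
  have hinv : ∀ n : ℕ, 1 - (q ^ n)⁻¹ = -(1 - q ^ n) / q ^ n := fun n => by field_simp; ring
  -- `f1` and `f3` handle the factors above the centre, `f2` and `f4` those below it.
  obtain ⟨y, hy⟩ : ∃ y, y = q ^ 2 * (q ^ (6 * (N + 1)))⁻¹ := ⟨_, rfl⟩
  have f1 : ∀ n, y * (q ^ 3) ^ (2 * (N + 1 + n)) = q ^ (6 * n + 2) := fun n => by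
    rw [hy, ← pow_mul, show 3 * (2 * (N + 1 + n)) = 6 * (N + 1) + 6 * n by ring, pow_add, pow_add]
    field_simp
  have f3 : ∀ n, y * (q ^ 3) ^ (2 * (N + 1 + n) + 1) = q ^ (6 * n + 5) := fun n => by
    rw [pow_succ, ← mul_assoc, f1]; ring
  have f2 : ∀ n ≤ N, y * (q ^ 3) ^ (2 * (N - n)) = (q ^ (6 * n + 4))⁻¹ := fun n hn => by
    obtain ⟨m, rfl⟩ := Nat.exists_eq_add_of_le hn
    rw [hy, ← pow_mul, show n + m - n = m by omega,
      show 6 * (n + m + 1) = 3 * (2 * m) + (6 * n + 4) + 2 by ring, pow_add, pow_add]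
    field_simp
  have f4 : ∀ n ≤ N, y * (q ^ 3) ^ (2 * (N - n) + 1) = (q ^ (6 * n + 1))⁻¹ := fun n hn => by
    rw [pow_succ, ← mul_assoc, f2 n hn, show 6 * n + 4 = (6 * n + 1) + 3 by ring, pow_add]
    field_simp
  have hy0 : ∀ k ≤ 2 * N + 1, 1 - y * (q ^ 3) ^ (2 * k) ≠ 0 := by
    intro k _
    rcases le_or_gt k N with h | h
    · have := f2 (N - k) (by omega)
      rw [show N - (N - k) = k by omega] at this
      rw [this, hinv]
      exact div_ne_zero (neg_ne_zero.2 (hlt _ (by omega))) (by positivity)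
    · obtain ⟨n, rfl⟩ := Nat.exists_eq_add_of_le h
      rw [show N.succ + n = N + 1 + n by rfl, f1]
      exact hlt _ (by omega)
  have h := finite_kronecker (pow_pos hq0 3) (pow_lt_one₀ hq0.le hq1 (by norm_num)) (2 * N + 1) y hy0
  rw [show 2 * N + 1 + 1 = (N + 1) + (N + 1) by ring, sum_range_add, ← sum_range_reflect,
    prod_range_add _ (N + 1) (N + 1), ← prod_range_reflect _ (N + 1),
    show range (2 * N + 1) = range ((N + 1) + N) by congr 1; ring, prod_range_add _ (N + 1) N,
    ← prod_range_reflect _ (N + 1), ← sum_add_distrib] at h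
  have hsum : ∀ n ∈ range (N + 1),
      (q ^ 3) ^ (N + 1 - 1 - n) / (1 - y * (q ^ 3) ^ (2 * (N + 1 - 1 - n))) *
          (oddEven (q ^ 3) (N + 1 - 1 - n) * oddEven (q ^ 3) (2 * N + 1 - (N + 1 - 1 - n)))
        + (q ^ 3) ^ (N + 1 + n) / (1 - y * (q ^ 3) ^ (2 * (N + 1 + n))) *
          (oddEven (q ^ 3) (N + 1 + n) * oddEven (q ^ 3) (2 * N + 1 - (N + 1 + n)))
      = ((q ^ 3) ^ (N + 1) * q⁻¹) * ((q ^ (3 * n + 1) / (1 - q ^ (6 * n + 2))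
        - q ^ (3 * n + 2) / (1 - q ^ (6 * n + 4)))
        * (oddEven (q ^ 3) (N + 1 + n) * oddEven (q ^ 3) (N - n))) := by
    intro n hn
    have hn' : n ≤ N := by simp at hn; omega
    rw [show N + 1 - 1 - n = N - n by omega, show 2 * N + 1 - (N - n) = N + 1 + n by omega,
      show 2 * N + 1 - (N + 1 + n) = N - n by omega, f1, f2 n hn', hinv]
    have c1 := hlt (6 * n + 2) (by omega)
    have c2 := hlt (6 * n + 4) (by omega)
    have d1 : (q ^ 3) ^ (N - n) / (-(1 - q ^ (6 * n + 4)) / q ^ (6 * n + 4))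
        = -((q ^ 3) ^ (N + 1) * q⁻¹) * (q ^ (3 * n + 2) / (1 - q ^ (6 * n + 4))) := by
      obtain ⟨m, rfl⟩ := Nat.exists_eq_add_of_le hn'
      rw [show n + m - n = m by omega]
      field_simp
      ring
    have d2 : (q ^ 3) ^ (N + 1 + n) / (1 - q ^ (6 * n + 2))
        = ((q ^ 3) ^ (N + 1) * q⁻¹) * (q ^ (3 * n + 1) / (1 - q ^ (6 * n + 2))) := by
      field_simp
      ring
    rw [d1, d2]
    ring
  have hA : ∀ c n, qPoch (q ^ c) (q ^ 6) n = ∏ i ∈ range n, (1 - q ^ (6 * i + c)) := fun c n =>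
    prod_congr rfl fun i _ => by ring
  have hpinv : ∀ c K, ∏ i ∈ range K, (1 - (q ^ (6 * i + c))⁻¹)
      = qPoch (q ^ c) (q ^ 6) K * ∏ i ∈ range K, (-(q ^ (6 * i + c))⁻¹) := fun c K => by
    rw [hA, ← prod_mul_distrib]
    exact prod_congr rfl fun i _ => by field_simp; ring
  have hshift : ∀ K, ∏ i ∈ range K, (-(q ^ (6 * i + 1))⁻¹)
      = (q ^ 3) ^ K * ∏ i ∈ range K, (-(q ^ (6 * i + 4))⁻¹) := fun K => by
    rw [← card_range K, ← prod_const, card_range, ← prod_mul_distrib]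
    exact prod_congr rfl fun i _ => by
      rw [show 6 * i + 4 = (6 * i + 1) + 3 by ring, pow_add _ (6 * i + 1)]; field_simp
  have n1 : ∏ i ∈ range (N + 1), (1 - y * (q ^ 3) ^ (2 * (N + 1 - 1 - i) + 1))
      = qPoch (q ^ 1) (q ^ 6) (N + 1)
        * ((q ^ 3) ^ (N + 1) * ∏ i ∈ range (N + 1), (-(q ^ (6 * i + 4))⁻¹)) := by
    rw [← hshift, ← hpinv]
    refine prod_congr rfl fun i hi => ?_
    rw [Nat.add_sub_cancel, f4 i (by simp at hi; omega)]
  have n2 : ∏ i ∈ range (N + 1), (1 - y * (q ^ 3) ^ (2 * (N + 1 - 1 - i)))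
      = qPoch (q ^ 4) (q ^ 6) (N + 1) * ∏ i ∈ range (N + 1), (-(q ^ (6 * i + 4))⁻¹) := by
    rw [← hpinv]
    refine prod_congr rfl fun i hi => ?_
    rw [Nat.add_sub_cancel, f2 i (by simp at hi; omega)]
  have hD : ∏ i ∈ range (N + 1), (-(q ^ (6 * i + 4))⁻¹) ≠ 0 :=
    prod_ne_zero_iff.2 fun i _ => neg_ne_zero.2 (by positivity)
  rw [sum_congr rfl hsum, ← mul_sum, n1, n2] at h
  simp only [f1, f3, ← hA] at h
  have hS : (q ^ 3) ^ (N + 1) * q⁻¹ ≠ 0 := by positivity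
  have hp : ∀ c n, c ≠ 0 → qPoch (q ^ c) (q ^ 6) n ≠ 0 := fun c n hc =>
    (qPoch_pos (pow_pos hq0 c) (pow_lt_one₀ hq0.le hq1 hc) (pow_pos hq0 6)
      (pow_lt_one₀ hq0.le hq1 (by norm_num)) n).ne'
  have p2 := hp 2 (N + 1) (by norm_num)
  have p4 := hp 4 (N + 1) (by norm_num)
  rw [← mul_right_inj' hS, h]
  generalize ∏ i ∈ range (N + 1), (-(q ^ (6 * i + 4))⁻¹) = D at hD
  simp only [pow_one]
  field_simp

/-! ### Passage to the limit -/

/-- Gauss's product formula for `ψ(r)`, where `l = (r; r)_∞` and `l2 = (r²; r²)_∞`. -/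
lemma psi_eq {r l l2 : ℝ} (hr0 : 0 < r) (hr1 : r < 1) (hl0 : 0 < l)
    (hl : Tendsto (qPoch r r) atTop (𝓝 l))
    (hl2 : Tendsto (qPoch (r ^ 2) (r ^ 2)) atTop (𝓝 l2)) :
    ∑' n : ℕ, r ^ (n * (n + 1) / 2) = l2 ^ 2 / l := by
  have hs : Summable fun n : ℕ => r ^ (n * (n + 1) / 2) := by
    refine (summable_geometric_of_lt_one hr0.le hr1).of_nonneg_of_le (fun n => by positivity)
      fun n => pow_le_pow_of_le_one hr0.le hr1.le ?_
    rw [Nat.le_div_iff_mul_le (by norm_num)]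
    rcases n with _ | n
    · simp
    · gcongr; omega
  have h1 := tendsto_sum_mul_mul hs (hl.inv₀ hl0.ne')
  have hH : ∀ N, ∏ i ∈ range N, (1 + r ^ (i + 1)) = qPoch (r ^ 2) (r ^ 2) N / qPoch r r N := by
    intro N
    rw [eq_div_iff (qPoch_pos hr0 hr1 hr0 hr1 N).ne', qPoch, qPoch, ← prod_mul_distrib]
    exact prod_congr rfl fun i _ => by ring
  simp only [finite_gauss hr0 hr1, hH] at h1
  have h2 : Tendsto (fun N => (qPoch (r ^ 2) (r ^ 2) N / qPoch r r N) ^ 2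
      * (qPoch r r (2 * N + 1))⁻¹) atTop (𝓝 ((l2 / l) ^ 2 * l⁻¹)) :=
    ((hl2.div hl hl0.ne').pow 2).mul ((hl.comp (tendsto_atTop_mono
      (fun N => by simp only [id]; omega) tendsto_id)).inv₀ hl0.ne')
  have h3 := tendsto_nhds_unique h1 h2
  field_simp at h3 ⊢
  linarith

theorem stmt_15 (q : ℝ) (hq0 : 0 < q) (hq1 : q < 1) :
    q * (∑' n : ℕ, (q ^ 3) ^ (n * (n + 1) / 2)) ^ 3
        / (∑' n : ℕ, q ^ (n * (n + 1) / 2))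
      = (∑' n : ℕ, q ^ (3 * n + 1) / (1 - q ^ (6 * n + 2)))
        - ∑' n : ℕ, q ^ (3 * n + 2) / (1 - q ^ (6 * n + 4)) := by
  have hlt : ∀ c : ℕ, c ≠ 0 → q ^ c < 1 := fun c hc => pow_lt_one₀ hq0.le hq1 hc
  have hex : ∀ c : ℕ, c ≠ 0 → ∃ l, 0 < l ∧ Tendsto (qPoch (q ^ c) (q ^ 6)) atTop (𝓝 l) :=
    fun c hc => exists_tendsto_qPoch (pow_pos hq0 c) (hlt c hc) (pow_pos hq0 6) (hlt 6 (by norm_num))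
  obtain ⟨e1, p1, h1⟩ := hex 1 (by norm_num)
  obtain ⟨e2, p2, h2⟩ := hex 2 (by norm_num)
  obtain ⟨e3, p3, h3⟩ := hex 3 (by norm_num)
  obtain ⟨e4, p4, h4⟩ := hex 4 (by norm_num)
  obtain ⟨e5, p5, h5⟩ := hex 5 (by norm_num)
  obtain ⟨e6, p6, h6⟩ := hex 6 (by norm_num)
  -- Dissections modulo `6` of the Euler products in `q`, `q ^ 2` and `q ^ 3`
  have E1 : Tendsto (qPoch q q) atTop (𝓝 (e1 * e2 * e3 * e4 * e5 * e6)) := by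
    obtain ⟨l, -, hl⟩ := exists_tendsto_qPoch hq0 hq1 hq0 hq1
    have hd : ∀ n, qPoch q q (6 * n) = qPoch (q ^ 1) (q ^ 6) n * qPoch (q ^ 2) (q ^ 6) n
        * qPoch (q ^ 3) (q ^ 6) n * qPoch (q ^ 4) (q ^ 6) n * qPoch (q ^ 5) (q ^ 6) n
        * qPoch (q ^ 6) (q ^ 6) n := by
      intro n
      induction n with
      | zero => simp
      | succ n ih =>
        rw [show 6 * (n + 1) = 6 * n + 1 + 1 + 1 + 1 + 1 + 1 by ring]
        simp only [qPoch_succ, ih]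
        ring
    have := hl.comp (tendsto_atTop_mono (fun n => by simp only [id]; omega) tendsto_id :
      Tendsto (fun n => 6 * n) atTop atTop)
    rw [← tendsto_nhds_unique (this.congr hd) (((((h1.mul h2).mul h3).mul h4).mul h5).mul h6)]
    exact hl
  have E2 : Tendsto (qPoch (q ^ 2) (q ^ 2)) atTop (𝓝 (e2 * e4 * e6)) := by
    obtain ⟨l, -, hl⟩ := exists_tendsto_qPoch (pow_pos hq0 2) (hlt 2 (by norm_num))
      (pow_pos hq0 2) (hlt 2 (by norm_num))
    have hd : ∀ n, qPoch (q ^ 2) (q ^ 2) (3 * n) = qPoch (q ^ 2) (q ^ 6) n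
        * qPoch (q ^ 4) (q ^ 6) n * qPoch (q ^ 6) (q ^ 6) n := by
      intro n
      induction n with
      | zero => simp
      | succ n ih =>
        rw [show 3 * (n + 1) = 3 * n + 1 + 1 + 1 by ring]
        simp only [qPoch_succ, ih]
        ring
    have := hl.comp (tendsto_atTop_mono (fun n => by simp only [id]; omega) tendsto_id :
      Tendsto (fun n => 3 * n) atTop atTop)
    rw [← tendsto_nhds_unique (this.congr hd) ((h2.mul h4).mul h6)]
    exact hl
  have E3 : Tendsto (qPoch (q ^ 3) (q ^ 3)) atTop (𝓝 (e3 * e6)) := by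
    obtain ⟨l, -, hl⟩ := exists_tendsto_qPoch (pow_pos hq0 3) (hlt 3 (by norm_num))
      (pow_pos hq0 3) (hlt 3 (by norm_num))
    have hd : ∀ n, qPoch (q ^ 3) (q ^ 3) (2 * n) = qPoch (q ^ 3) (q ^ 6) n
        * qPoch (q ^ 6) (q ^ 6) n := by
      intro n
      induction n with
      | zero => simp
      | succ n ih =>
        rw [show 2 * (n + 1) = 2 * n + 1 + 1 by ring]
        simp only [qPoch_succ, ih]
        ring
    have := hl.comp (tendsto_atTop_mono (fun n => by simp only [id]; omega) tendsto_id :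
      Tendsto (fun n => 2 * n) atTop atTop)
    rw [← tendsto_nhds_unique (this.congr hd) (h3.mul h6)]
    exact hl
  have h36 : (q ^ 3) ^ 2 = q ^ 6 := by ring
  rw [psi_eq hq0 hq1 (by positivity) E1 E2,
    psi_eq (pow_pos hq0 3) (hlt 3 (by norm_num)) (by positivity) E3 (by rw [h36]; exact h6)]
  have hsum : ∀ c d : ℕ, 0 < d → Summable fun n : ℕ => q ^ (3 * n + c) / (1 - q ^ (6 * n + d)) := by
    intro c d hd
    have hlt' : ∀ n, q ^ (6 * n + d) ≤ q := fun n => by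
      simpa using pow_le_pow_of_le_one hq0.le hq1.le (show 1 ≤ 6 * n + d by omega)
    refine ((summable_geometric_of_lt_one hq0.le hq1).mul_right (1 - q)⁻¹).of_nonneg_of_le
      (fun n => div_nonneg (by positivity) (by linarith [hlt' n])) fun n => ?_
    rw [div_eq_mul_inv]
    have hq' : 0 < 1 - q := by linarith
    refine mul_le_mul (pow_le_pow_of_le_one hq0.le hq1.le (by omega)) ?_
      (inv_nonneg.2 (by linarith [hlt' n])) (by positivity)
    exact inv_anti₀ hq' (by linarith [hlt' n])
  rw [← (hsum 1 2 (by norm_num)).tsum_sub (hsum 2 4 (by norm_num))]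
  have hC : Tendsto (oddEven (q ^ 3)) atTop (𝓝 (e3 / e6)) := by
    have := h3.div h6 p6.ne'
    simp only [← h36] at this
    exact this
  have hL := tendsto_sum_mul_mul ((hsum 1 2 (by norm_num)).sub (hsum 2 4 (by norm_num))) hC
  simp only [finite_lambert hq0 hq1] at hL
  have hs : ∀ {a : ℕ → ℝ} {l : ℝ}, Tendsto a atTop (𝓝 l) → Tendsto (fun n => a (n + 1)) atTop (𝓝 l) :=
    fun h => h.comp (tendsto_add_atTop_nat 1)
  have hR := (((hs h1).mul h5).const_mul q).div ((hs h2).mul (hs h4)) (by positivity)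
  have key := tendsto_nhds_unique hL hR
  generalize (∑' n : ℕ, (q ^ (3 * n + 1) / (1 - q ^ (6 * n + 2))
        - q ^ (3 * n + 2) / (1 - q ^ (6 * n + 4)))) = S at key ⊢
  have hS : S = q * (e1 * e5) / (e2 * e4) / (e3 / e6) ^ 2 := by
    rw [← key]; field_simp
  rw [hS]
  field_simp
end

section
/- Let $\phi(q) = \sum_{n=-\infty}^{\infty} q^{n^2}$ for $0<q<1$. Then $\frac{\phi(-q)^3}{\phi(-q^3)} = 1 - 6\sum_{n=1}^{\infty}\frac{q^{3n-2}}{1+q^{3n-2}} + 6\sum_{n=1}^{\infty}\frac{q^{3n-1}}{1+q^{3n-1}}$. -/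
/-!
Write `A_N(q) = ∏_{i ≤ N} (1 + q^i) / (1 - q^i)`, with limit `A(q)`. Gauss's identity says
`φ(-q) = 1 / A(q)`; it is the limit of Shanks' finite identity `shanks`.

The main ingredient is the partial fraction expansion (`finite_identity`)
`∏_{n ≤ N} (1 - q^n + q^{2n}) / (1 + q^n + q^{2n})
  = A_N(q)^2 + 6 ∑_{n=1}^{N} (-1)^n A_{N+n}(q) A_{N-n}(q) q^n / (1 + q^n + q^{2n})`.
It is a finite form of Kronecker's product formula for a Lambert series at a cube root of unity.
Since `1 - x + x^2 = (1 + x^3) / (1 + x)` and `1 + x + x^2 = (1 - x^3) / (1 - x)`, the left side is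
`A_N(q^3) / A_N(q)`. Dominated convergence gives
`A(q^3) / A(q)^3 = 1 + 6 ∑_{n ≥ 1} (-1)^n q^n / (1 + q^n + q^{2n})`,
whose left side is `φ(-q)^3 / φ(-q^3)`. Writing `q^n / (1 + q^n + q^{2n})` as
`(q^n - q^{2n}) / (1 - q^{3n})`, expanding in geometric series and exchanging the two summations
(`lambert`) turns the right side into the stated Lambert series.
-/

open Finset Filter Topology

/-! ### The Euler-type partial products -/

/-- The partial product `A_n(q) = ∏_{i=1}^{n} (1 + q^i) / (1 - q^i)`. Its limit is `1 / φ(-q)`. -/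
noncomputable def eulerA (q : ℝ) (n : ℕ) : ℝ :=
  ∏ i ∈ range n, (1 + q ^ (i + 1)) / (1 - q ^ (i + 1))

lemma eulerA_succ (q : ℝ) (n : ℕ) :
    eulerA q (n + 1) = eulerA q n * ((1 + q ^ (n + 1)) / (1 - q ^ (n + 1))) :=
  prod_range_succ _ _

lemma one_sub_pow_succ_pos {q : ℝ} (hq0 : 0 < q) (hq1 : q < 1) (n : ℕ) : 0 < 1 - q ^ (n + 1) :=
  sub_pos.2 (pow_lt_one₀ hq0.le hq1 n.succ_ne_zero)

lemma one_le_ratio {q : ℝ} (hq0 : 0 < q) (hq1 : q < 1)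
    (n : ℕ) : 1 ≤ (1 + q ^ (n + 1)) / (1 - q ^ (n + 1)) := by
  have := one_sub_pow_succ_pos hq0 hq1 n
  have : 0 < q ^ (n + 1) := by positivity
  rw [one_le_div (by assumption)]
  linarith

lemma eulerA_pos {q : ℝ} (hq0 : 0 < q) (hq1 : q < 1) (n : ℕ) : 0 < eulerA q n :=
  prod_pos fun i _ => zero_lt_one.trans_le (one_le_ratio hq0 hq1 i)

lemma eulerA_mono {q : ℝ} (hq0 : 0 < q) (hq1 : q < 1) : Monotone (eulerA q) := by
  refine monotone_nat_of_le_succ fun n => ?_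
  rw [eulerA_succ]
  exact le_mul_of_one_le_right (eulerA_pos hq0 hq1 n).le (one_le_ratio hq0 hq1 n)

/-- The partial products stay bounded, by `1 + x ≤ exp x`; hence their reciprocals have a
positive limit. -/
lemma eulerA_bdd {q : ℝ} (hq0 : 0 < q) (hq1 : q < 1) : ∃ C, ∀ n, eulerA q n ≤ C := by
  refine ⟨Real.exp (2 / (1 - q) * (1 - q)⁻¹), fun n => ?_⟩
  have h1 : 0 < 1 - q := sub_pos.2 hq1
  have key : ∀ i ∈ range n, (1 + q ^ (i + 1)) / (1 - q ^ (i + 1))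
      ≤ Real.exp (2 / (1 - q) * q ^ i) := by
    intro i _
    have hp := one_sub_pow_succ_pos hq0 hq1 i
    have hqi : 0 < q ^ i := by positivity
    have hle : q ^ (i + 1) ≤ q ^ i := pow_le_pow_of_le_one hq0.le hq1.le i.le_succ
    have hle' : q ^ (i + 1) ≤ q := by
      simpa using pow_le_pow_of_le_one hq0.le hq1.le (Nat.succ_le_succ (Nat.zero_le i))
    refine le_trans ?_ (Real.add_one_le_exp _)
    have : (1 + q ^ (i + 1)) / (1 - q ^ (i + 1)) = 2 * q ^ (i + 1) / (1 - q ^ (i + 1)) + 1 := by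
      field_simp; ring
    rw [this, div_mul_eq_mul_div]
    gcongr
  calc eulerA q n ≤ ∏ i ∈ range n, Real.exp (2 / (1 - q) * q ^ i) :=
        prod_le_prod (fun i _ => zero_le_one.trans (one_le_ratio hq0 hq1 i)) key
    _ = Real.exp (2 / (1 - q) * ∑ i ∈ range n, q ^ i) := by
        rw [← Real.exp_sum, mul_sum]
    _ ≤ _ := by
        have := (summable_geometric_of_lt_one hq0.le hq1).sum_le_tsum (range n)
          (fun i _ => by positivity)
        rw [tsum_geometric_of_lt_one hq0.le hq1] at this
        gcongr

/-! ### Gauss's identity for φ(-q) -/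

/-- Passing from `n` to `n + 1` in the sum of `shanks` is a telescoping operation in `s`. The
right-hand side is `G(M + 1) - G(1)` with
`G(s) = (-1)^s (A_{s-1} / A_n) q^{s(n+1)} · 2 / (1 + q^{n+1})`. -/
lemma shanks_telescope {q : ℝ} (hq0 : 0 < q) (hq1 : q < 1) (n M : ℕ) :
    ∑ s ∈ range M, ((-1) ^ (s + 1) * (eulerA q (s + 1) / eulerA q (n + 1))
          * q ^ ((s + 1) * (n + 2)) * (2 / (1 + q ^ (s + 1)))
        - (-1) ^ (s + 1) * (eulerA q (s + 1) / eulerA q n)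
          * q ^ ((s + 1) * (n + 1)) * (2 / (1 + q ^ (s + 1))))
      = (-1) ^ (M + 1) * (eulerA q M / eulerA q n) * q ^ ((M + 1) * (n + 1))
          * (2 / (1 + q ^ (n + 1)))
        + q ^ (n + 1) / eulerA q n * (2 / (1 + q ^ (n + 1))) := by
  have hAn := (eulerA_pos hq0 hq1 n).ne'
  have hn := (one_sub_pow_succ_pos hq0 hq1 n).ne'
  have hn' : 1 + q ^ (n + 1) ≠ 0 := by positivity
  induction M with
  | zero =>
    have e0 : eulerA q 0 = 1 := by simp [eulerA]
    simp [e0]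
    ring
  | succ M ih =>
    have hM := (one_sub_pow_succ_pos hq0 hq1 M).ne'
    have hM' : 1 + q ^ (M + 1) ≠ 0 := by positivity
    rw [sum_range_succ, ih, eulerA_succ, eulerA_succ,
      show (M + 1) * (n + 2) = (M + 1) * (n + 1) + (M + 1) by ring,
      show (M + 1 + 1) * (n + 1) = (M + 1) * (n + 1) + (n + 1) by ring,
      pow_add q ((M + 1) * (n + 1)), pow_add q ((M + 1) * (n + 1)), pow_succ (-1 : ℝ) (M + 1)]
    generalize q ^ ((M + 1) * (n + 1)) = a
    generalize q ^ (M + 1) = x at *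
    generalize q ^ (n + 1) = y at *
    generalize (-1 : ℝ) ^ (M + 1) = e
    field_simp
    ring

/-- Shanks' finite form of Gauss's identity `φ(-q) = ∏ (1 - q^i) / (1 + q^i)`. Each of the
`n` summands on the right is `O(q^n)`, so their sum vanishes in the limit. -/
lemma shanks {q : ℝ} (hq0 : 0 < q) (hq1 : q < 1) (n : ℕ) :
    1 + 2 * ∑ s ∈ range n, (-1) ^ (s + 1) * q ^ ((s + 1) ^ 2)
      = (eulerA q n)⁻¹ + ∑ s ∈ range n, (-1) ^ (s + 1) * (eulerA q (s + 1) / eulerA q n)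
          * q ^ ((s + 1) * (n + 1)) * (2 / (1 + q ^ (s + 1))) := by
  induction n with
  | zero => simp [eulerA]
  | succ n ih =>
    have hAn := (eulerA_pos hq0 hq1 n).ne'
    have hAn' := (eulerA_pos hq0 hq1 (n + 1)).ne'
    have hn := (one_sub_pow_succ_pos hq0 hq1 n).ne'
    have hn' : 1 + q ^ (n + 1) ≠ 0 := by positivity
    have ht := shanks_telescope hq0 hq1 n n
    rw [sum_sub_distrib] at ht
    rw [sum_range_succ, mul_add, ← add_assoc, ih, sum_range_succ, div_self hAn']
    rw [div_self hAn] at ht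
    have hA : (eulerA q (n + 1))⁻¹ - (eulerA q n)⁻¹
        = - (q ^ (n + 1) / eulerA q n * (2 / (1 + q ^ (n + 1)))) := by
      rw [eulerA_succ]; field_simp; ring
    have hlast : 2 * ((-1 : ℝ) ^ (n + 1) * q ^ ((n + 1) ^ 2))
        = (-1) ^ (n + 1) * 1 * q ^ ((n + 1) * (n + 1)) * (2 / (1 + q ^ (n + 1)))
          + (-1) ^ (n + 1) * 1 * q ^ ((n + 1) * (n + 1 + 1)) * (2 / (1 + q ^ (n + 1))) := by
      rw [show (n + 1) * (n + 1 + 1) = (n + 1) ^ 2 + (n + 1) by ring, ← sq, pow_add]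
      field_simp
      ring
    linear_combination hlast - ht - hA

lemma summable_theta {q : ℝ} (hq0 : 0 < q) (hq1 : q < 1)
    : Summable fun s : ℕ => (-1) ^ (s + 1) * q ^ ((s + 1) ^ 2) := by
  refine Summable.of_norm_bounded (summable_geometric_of_lt_one hq0.le hq1) fun s => ?_
  rw [norm_mul, norm_pow, norm_neg, norm_one, one_pow, one_mul,
    Real.norm_of_nonneg (by positivity)]
  exact pow_le_pow_of_le_one hq0.le hq1.le (by nlinarith)

/-- Gauss's identity, with `φ(-q)` written as a one-sided sum. -/
lemma tendsto_eulerA_inv {q : ℝ} (hq0 : 0 < q) (hq1 : q < 1) :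
    Tendsto (fun n => (eulerA q n)⁻¹) atTop
      (𝓝 (1 + 2 * ∑' s : ℕ, (-1) ^ (s + 1) * q ^ ((s + 1) ^ 2))) := by
  have hs := summable_theta hq0 hq1
  have h1 := (hs.hasSum.tendsto_sum_nat.const_mul 2).const_add 1
  have hz : Tendsto (fun n : ℕ => 2 * (n * q ^ n)) atTop (𝓝 0) := by
    simpa using (tendsto_self_mul_const_pow_of_lt_one hq0.le hq1).const_mul 2
  have herr : Tendsto (fun n => ∑ s ∈ range n, (-1) ^ (s + 1) * (eulerA q (s + 1) / eulerA q n)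
          * q ^ ((s + 1) * (n + 1)) * (2 / (1 + q ^ (s + 1)))) atTop (𝓝 0) := by
    refine squeeze_zero_norm (fun n => ?_) hz
    refine (norm_sum_le_of_le (f := _) (range n) (n := fun _ => 2 * q ^ n) fun s hs => ?_).trans ?_
    · have hsn : s + 1 ≤ n := mem_range.1 hs
      have h0 := eulerA_pos hq0 hq1 (s + 1)
      have hn0 := eulerA_pos hq0 hq1 n
      rw [norm_mul, norm_mul, norm_mul, norm_pow, norm_neg, norm_one, one_pow, one_mul,
        Real.norm_of_nonneg (by positivity), Real.norm_of_nonneg (by positivity),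
        Real.norm_of_nonneg (by positivity)]
      have a1 : eulerA q (s + 1) / eulerA q n ≤ 1 :=
        (div_le_one hn0).2 (eulerA_mono hq0 hq1 hsn)
      have a2 : q ^ ((s + 1) * (n + 1)) ≤ q ^ n :=
        pow_le_pow_of_le_one hq0.le hq1.le (by nlinarith)
      have a3 : 2 / (1 + q ^ (s + 1)) ≤ 2 :=
        div_le_self zero_le_two (by linarith [pow_pos hq0 (s + 1)])
      calc _ ≤ 1 * q ^ n * 2 := by gcongr
        _ = _ := by ring
    · simp; linarith
  have h2 := h1.sub herr
  rw [sub_zero] at h2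
  refine h2.congr fun n => ?_
  rw [shanks hq0 hq1 n]; ring

lemma phi_eq {q : ℝ} (hq0 : 0 < q) (hq1 : q < 1) : ∑' n : ℤ, (-q) ^ ((n ^ 2 : ℤ))
    = 1 + 2 * ∑' s : ℕ, (-1) ^ (s + 1) * q ^ ((s + 1) ^ 2) := by
  have hs := summable_theta hq0 hq1
  have e : ∀ s : ℕ, (-q) ^ (((s : ℤ) + 1) ^ 2) = (-1) ^ (s + 1) * q ^ ((s + 1) ^ 2) := by
    intro s
    have : ((s : ℤ) + 1) ^ 2 = ((s + 1) ^ 2 : ℕ) := by push_cast; ring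
    rw [this, zpow_natCast, neg_pow, sq (s + 1), pow_mul (-1 : ℝ)]
    congr 1
    rcases neg_one_pow_eq_or ℝ (s + 1) with h | h <;> rw [h]
    · simp
    · rw [← h, ← pow_mul, ← sq]
      rcases Nat.even_or_odd (s + 1) with h' | h'
      · rw [h'.neg_one_pow] at h; norm_num at h
      · rw [h'.neg_one_pow, h'.pow.neg_one_pow]
  have := HasSum.of_add_one_of_neg_add_one (f := fun n : ℤ => (-q) ^ ((n ^ 2 : ℤ)))
    (m := ∑' s : ℕ, (-1) ^ (s + 1) * q ^ ((s + 1) ^ 2))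
    (m' := ∑' s : ℕ, (-1) ^ (s + 1) * q ^ ((s + 1) ^ 2))
    (by simpa only [e] using hs.hasSum)
    (by simpa only [neg_sq, e] using hs.hasSum)
  rw [this.tsum_eq]; simp; ring

/-! ### Partial fractions at a cube root of unity -/

/-- The rational-function identity behind one step of `pf_telescope`, with `x = q^{M+1}` and
`y = q^{N-M}`. -/
lemma pf_step (e a b c d x y : ℝ) (d3 : 1 + x + x ^ 2 ≠ 0) (d1 : 1 - y ≠ 0) (d2 : 1 - x ^ 2 * y ≠ 0)
  (d4 : 1 + x * y + x ^ 2 * y ^ 2 ≠ 0) (d5 : 1 - x ^ 2 * y ^ 2 ≠ 0) :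
   (e * (a * (b * ((1 + y) / (1 - y)))) - d * c) *
     (x * y * (1 + x ^ 2 * y ^ 2) / ((1 - x ^ 2 * y ^ 2) * (1 + x * y + x ^ 2 * y ^ 2)))
   + (e * -1 * (a * ((1 + x ^ 2 * y) / (1 - x ^ 2 * y)) * (b * ((1 + y) / (1 - y)))) * (x / (1 + x + x ^ 2))
   - (1 - x * y + x ^ 2 * y ^ 2) / (1 + x * y + x ^ 2 * y ^ 2) *
     (e * -1 * (a * b) * (x / (1 + x + x ^ 2))))
   = (e * -1 * (a * ((1 + x ^ 2 * y) / (1 - x ^ 2 * y)) * b) - d * c) *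
     (x * y * (1 + x ^ 2 * y ^ 2) / ((1 - x ^ 2 * y ^ 2) * (1 + x * y + x ^ 2 * y ^ 2))) := by
  generalize h2 : 1 - x ^ 2 * y = D2 at *
  generalize h3 : 1 + x + x ^ 2 = D3 at *
  generalize h4 : 1 + x * y + x ^ 2 * y ^ 2 = D4 at *
  generalize h5 : 1 - x ^ 2 * y ^ 2 = D5 at *
  field_simp
  subst h2 h3 h4 h5
  ring

/-- Multiplying `finite_identity` at `N` by the next factor of its product and comparing with its
sum at `N + 1` gives a difference that telescopes in `n`, with antidifference
`(-1)^M A_{N+1+M} A_{N-M}` up to a factor independent of `M`. -/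
lemma pf_telescope {q : ℝ} (hq0 : 0 < q) (hq1 : q < 1) (N M : ℕ) (hM : M ≤ N) :
    ∑ n ∈ range M, ((-1) ^ (n + 1) * (eulerA q (N + 1 + (n + 1)) * eulerA q (N + 1 - (n + 1)))
          * (q ^ (n + 1) / (1 + q ^ (n + 1) + q ^ (2 * (n + 1))))
        - (1 - q ^ (N + 1) + q ^ (2 * (N + 1))) / (1 + q ^ (N + 1) + q ^ (2 * (N + 1)))
          * ((-1) ^ (n + 1) * (eulerA q (N + (n + 1)) * eulerA q (N - (n + 1)))
          * (q ^ (n + 1) / (1 + q ^ (n + 1) + q ^ (2 * (n + 1))))))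
      = ((-1) ^ M * (eulerA q (N + 1 + M) * eulerA q (N - M)) - eulerA q (N + 1) * eulerA q N)
        * (q ^ (N + 1) * (1 + q ^ (2 * (N + 1)))
          / ((1 - q ^ (2 * (N + 1))) * (1 + q ^ (N + 1) + q ^ (2 * (N + 1))))) := by
  induction M with
  | zero => simp
  | succ M ih =>
    obtain ⟨j, rfl⟩ := Nat.exists_eq_add_of_le hM
    rw [sum_range_succ, ih (by omega)]
    -- With `N = M + 1 + j` the truncated subtractions become honest indices.
    have e1 : M + 1 + j + 1 - (M + 1) = j + 1 := by omega
    have e2 : M + 1 + j - (M + 1) = j := by omega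
    have e3 : M + 1 + j - M = j + 1 := by omega
    have e4 : M + 1 + j + 1 + (M + 1) = (M + 1 + j + (M + 1)) + 1 := by omega
    have e5 : M + 1 + j + 1 + M = M + 1 + j + (M + 1) := by omega
    have hu : q ^ (M + 1 + j + 1) = q ^ (M + 1) * q ^ (j + 1) := by ring
    have hu2 : q ^ (2 * (M + 1 + j + 1)) = (q ^ (M + 1)) ^ 2 * (q ^ (j + 1)) ^ 2 := by ring
    have hx2 : q ^ (2 * (M + 1)) = (q ^ (M + 1)) ^ 2 := by ring
    have hv : q ^ (M + 1 + j + (M + 1) + 1) = (q ^ (M + 1)) ^ 2 * q ^ (j + 1) := by ring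
    have d1 := (one_sub_pow_succ_pos hq0 hq1 j).ne'
    have d2 := (one_sub_pow_succ_pos hq0 hq1 (M + 1 + j + (M + 1))).ne'
    have d3 : 1 + q ^ (M + 1) + q ^ (2 * (M + 1)) ≠ 0 := by positivity
    have d4 : 1 + q ^ (M + 1 + j + 1) + q ^ (2 * (M + 1 + j + 1)) ≠ 0 := by positivity
    have d5 := (one_sub_pow_succ_pos hq0 hq1 (2 * (M + 1 + j) + 1)).ne'
    rw [show 2 * (M + 1 + j) + 1 + 1 = 2 * (M + 1 + j + 1) by ring] at d5
    rw [e1, e2, e3, e4, e5, eulerA_succ q (M + 1 + j + (M + 1)), eulerA_succ q j,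
      pow_succ (-1 : ℝ) M]
    rw [hu2] at d5 d4
    rw [hu] at d4
    rw [hx2] at d3
    rw [hv] at d2
    rw [hu2, hx2, hv, hu]
    generalize (-1 : ℝ) ^ M = e
    generalize eulerA q (M + 1 + j + (M + 1)) = a
    generalize eulerA q j = b
    generalize eulerA q (M + 1 + j) = c
    generalize eulerA q (M + 1 + j + 1) = d
    generalize q ^ (M + 1) = x at *
    generalize q ^ (j + 1) = y at *
    linear_combination pf_step e a b c d x y d3 d1 d2 d4 d5

/-- Partial fraction expansion of `∏ (1 + z q^i)(1 + q^i / z) / ((1 - z q^i)(1 - q^i / z))`, taken at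
a primitive cube root of unity `z`. -/
lemma finite_identity {q : ℝ} (hq0 : 0 < q) (hq1 : q < 1) (N : ℕ) :
    ∏ i ∈ range N, (1 - q ^ (i + 1) + q ^ (2 * (i + 1))) / (1 + q ^ (i + 1) + q ^ (2 * (i + 1)))
      = eulerA q N ^ 2 + 6 * ∑ n ∈ range N,
        (-1) ^ (n + 1) * (eulerA q (N + (n + 1)) * eulerA q (N - (n + 1)))
          * (q ^ (n + 1) / (1 + q ^ (n + 1) + q ^ (2 * (n + 1)))) := by
  induction N with
  | zero => simp [eulerA]
  | succ N ih =>
    have ht := pf_telescope hq0 hq1 N N le_rfl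
    rw [sum_sub_distrib, ← mul_sum] at ht
    rw [prod_range_succ, ih, sum_range_succ]
    have d1 := (one_sub_pow_succ_pos hq0 hq1 N).ne'
    have d4 : 1 + q ^ (N + 1) + q ^ (2 * (N + 1)) ≠ 0 := by positivity
    have d5 := (one_sub_pow_succ_pos hq0 hq1 (2 * N + 1)).ne'
    have e1 : eulerA q (N + 1 + (N + 1)) = eulerA q (N + 1 + N)
        * ((1 + q ^ (2 * (N + 1))) / (1 - q ^ (2 * (N + 1)))) := by
      rw [← add_assoc, eulerA_succ]
      congr 4 <;> ring_nf
    rw [show 2 * N + 1 + 1 = 2 * (N + 1) by ring] at d5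
    -- The constant terms account for the lower boundary term.
    have e2 : eulerA q (N + 1) ^ 2 - (1 - q ^ (N + 1) + q ^ (2 * (N + 1))) / (1 + q ^ (N + 1) + q ^ (2 * (N + 1))) * eulerA q N ^ 2
       = 6 * (eulerA q (N + 1) * eulerA q N * (q ^ (N + 1) * (1 + q ^ (2 * (N + 1)))
          / ((1 - q ^ (2 * (N + 1))) * (1 + q ^ (N + 1) + q ^ (2 * (N + 1)))))) := by
      rw [eulerA_succ]
      rw [mul_comm 2, pow_mul] at *
      generalize q ^ (N + 1) = x at *
      field_simp
      ring
    rw [e1]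
    simp only [Nat.sub_self] at *
    have e0 : eulerA q 0 = 1 := by simp [eulerA]
    -- The top term of the new sum cancels the upper boundary term of the telescoping sum.
    have e3 : (-1) ^ (N + 1) * (eulerA q (N + 1 + N) * ((1 + q ^ (2 * (N + 1))) / (1 - q ^ (2 * (N + 1)))) * eulerA q 0)
          * (q ^ (N + 1) / (1 + q ^ (N + 1) + q ^ (2 * (N + 1))))
        = - ((-1) ^ N * (eulerA q (N + 1 + N) * eulerA q 0) * (q ^ (N + 1) * (1 + q ^ (2 * (N + 1)))
          / ((1 - q ^ (2 * (N + 1))) * (1 + q ^ (N + 1) + q ^ (2 * (N + 1)))))) := by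
      rw [pow_succ (-1 : ℝ)]
      field_simp
    rw [e3]
    linear_combination -e2 - 6 * ht

lemma prod_ratio {q : ℝ} (hq0 : 0 < q) (hq1 : q < 1) (N : ℕ) :
    ∏ i ∈ range N, (1 - q ^ (i + 1) + q ^ (2 * (i + 1))) / (1 + q ^ (i + 1) + q ^ (2 * (i + 1)))
      = eulerA (q ^ 3) N * (eulerA q N)⁻¹ := by
  rw [eulerA, eulerA, ← prod_inv_distrib, ← prod_mul_distrib]
  refine prod_congr rfl fun i _ => ?_
  have d1 := (one_sub_pow_succ_pos hq0 hq1 i).ne'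
  have d2 := (one_sub_pow_succ_pos (pow_pos hq0 3) (pow_lt_one₀ hq0.le hq1 three_ne_zero) i).ne'
  have d3 : 1 + q ^ (i + 1) + q ^ (2 * (i + 1)) ≠ 0 := by positivity
  have d4 : 1 + q ^ (i + 1) ≠ 0 := by positivity
  have h2 : q ^ (2 * (i + 1)) = (q ^ (i + 1)) ^ 2 := by ring
  have h3 : (q ^ 3) ^ (i + 1) = (q ^ (i + 1)) ^ 3 := by ring
  rw [h3] at d2
  rw [h2] at d3
  rw [h2, h3]
  generalize q ^ (i + 1) = x at *
  field_simp
  ring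

/-! ### Lambert series and the limit -/

/-- Both iterated sums of `∑ (-1)^n q^{(n+1)(3k+c)}` over `k, n ≥ 0`. -/
lemma lambert {q : ℝ} (hq0 : 0 < q) (hq1 : q < 1) (c : ℕ) (hc : 1 ≤ c) :
    Summable (fun n : ℕ => (-1) ^ n * (q ^ (c * (n + 1)) / (1 - q ^ (3 * (n + 1))))) ∧
    ∑' k : ℕ, q ^ (3 * k + c) / (1 + q ^ (3 * k + c))
      = ∑' n : ℕ, (-1) ^ n * (q ^ (c * (n + 1)) / (1 - q ^ (3 * (n + 1)))) := by
  let f : ℕ → ℕ → ℝ := fun k n => (-1) ^ n * q ^ ((n + 1) * (3 * k + c))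
  have hf : Summable (Function.uncurry f) := by
    have hg := summable_geometric_of_lt_one hq0.le hq1
    refine Summable.of_norm_bounded (hg.mul_of_nonneg hg (fun _ => by positivity)
      (fun _ => by positivity)) ?_
    rintro ⟨k, n⟩
    simp only [Function.uncurry, f]
    rw [norm_mul, norm_pow, norm_neg, norm_one, one_pow, one_mul,
      Real.norm_of_nonneg (by positivity), ← pow_add]
    exact pow_le_pow_of_le_one hq0.le hq1.le (by nlinarith)
  have h1 : ∀ k, HasSum (f k) (q ^ (3 * k + c) / (1 + q ^ (3 * k + c))) := by
    intro k
    have hx0 : 0 < q ^ (3 * k + c) := by positivity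
    have hx1 : q ^ (3 * k + c) < 1 := pow_lt_one₀ hq0.le hq1 (by omega)
    have := (hasSum_geometric_of_norm_lt_one (ξ := -q ^ (3 * k + c))
      (by rwa [norm_neg, Real.norm_of_nonneg hx0.le])).mul_left (q ^ (3 * k + c))
    rw [sub_neg_eq_add, ← div_eq_mul_inv] at this
    have hfun : f k = fun n => q ^ (3 * k + c) * (-q ^ (3 * k + c)) ^ n := by
      funext n
      simp only [f]
      rw [neg_pow (q ^ (3 * k + c)) n, mul_comm (n + 1), pow_mul, pow_succ]
      ring
    rw [hfun]
    exact this
  have h2 : ∀ n, HasSum (fun k => f k n)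
      ((-1) ^ n * (q ^ (c * (n + 1)) / (1 - q ^ (3 * (n + 1))))) := by
    intro n
    have := ((hasSum_geometric_of_lt_one (r := q ^ (3 * (n + 1))) (by positivity)
      (pow_lt_one₀ hq0.le hq1 (by omega))).mul_left (q ^ (c * (n + 1)))).mul_left ((-1) ^ n)
    rw [← div_eq_mul_inv] at this
    have hfun : (fun k => f k n)
        = fun k => (-1) ^ n * (q ^ (c * (n + 1)) * (q ^ (3 * (n + 1))) ^ k) := by
      funext k
      simp only [f]
      rw [← pow_mul, ← pow_add]
      ring_nf
    rw [hfun]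
    exact this
  refine ⟨(hf.prod_symm.hasSum.prod_fiberwise h2).summable, ?_⟩
  calc _ = ∑' k, ∑' n, f k n := tsum_congr fun k => (h1 k).tsum_eq.symm
    _ = ∑' n, ∑' k, f k n := hf.tsum_comm.symm
    _ = _ := tsum_congr fun n => (h2 n).tsum_eq

/-- Tannery's theorem applied to the right-hand side of `finite_identity`. -/
lemma tendsto_sum_limit {q : ℝ} (hq0 : 0 < q) (hq1 : q < 1)
    {a : ℝ} (ha : Tendsto (eulerA q) atTop (𝓝 a)) :
    Tendsto (fun N => ∑ n ∈ range N,
        (-1) ^ (n + 1) * (eulerA q (N + (n + 1)) * eulerA q (N - (n + 1)))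
          * (q ^ (n + 1) / (1 + q ^ (n + 1) + q ^ (2 * (n + 1))))) atTop
      (𝓝 (∑' n : ℕ, (-1) ^ (n + 1) * (a * a)
          * (q ^ (n + 1) / (1 + q ^ (n + 1) + q ^ (2 * (n + 1)))))) := by
  obtain ⟨C, hC⟩ := eulerA_bdd hq0 hq1
  have hC0 : 0 ≤ C := (eulerA_pos hq0 hq1 0).le.trans (hC 0)
  have key := tendsto_tsum_of_dominated_convergence (𝓕 := atTop) (β := ℕ)
    (f := fun N n : ℕ => if n < N then
        (-1) ^ (n + 1) * (eulerA q (N + (n + 1)) * eulerA q (N - (n + 1)))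
          * (q ^ (n + 1) / (1 + q ^ (n + 1) + q ^ (2 * (n + 1)))) else 0)
    (g := fun n : ℕ => (-1) ^ (n + 1) * (a * a)
          * (q ^ (n + 1) / (1 + q ^ (n + 1) + q ^ (2 * (n + 1)))))
    (bound := fun n : ℕ => C * C * q ^ n)
    ((summable_geometric_of_lt_one hq0.le hq1).mul_left _) ?_ ?_
  · refine key.congr fun N => ?_
    rw [tsum_eq_sum (s := range N) fun n hn => if_neg (by simpa using hn)]
    exact sum_congr rfl fun n hn => if_pos (mem_range.1 hn)
  · intro n
    have l1 := ha.comp (tendsto_add_atTop_nat (n + 1))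
    have l2 := ha.comp (tendsto_sub_atTop_nat (n + 1))
    refine (((l1.mul l2).const_mul _).mul_const _).congr' ?_
    filter_upwards [eventually_gt_atTop n] with N hN
    simp [hN]
  · refine Eventually.of_forall fun N n => ?_
    split_ifs with h
    · have p1 := eulerA_pos hq0 hq1 (N + (n + 1))
      have p2 := eulerA_pos hq0 hq1 (N - (n + 1))
      rw [norm_mul, norm_mul, norm_pow, norm_neg, norm_one, one_pow, one_mul,
        Real.norm_of_nonneg (by positivity), Real.norm_of_nonneg (by positivity)]
      have b1 : q ^ (n + 1) / (1 + q ^ (n + 1) + q ^ (2 * (n + 1))) ≤ q ^ n :=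
        (div_le_self (by positivity) (by
          linarith [pow_pos hq0 (n + 1), pow_pos hq0 (2 * (n + 1))])).trans
          (pow_le_pow_of_le_one hq0.le hq1.le n.le_succ)
      have c1 := hC (N + (n + 1))
      have c2 := hC (N - (n + 1))
      gcongr
    · rw [norm_zero]; positivity

lemma tendsto_eulerA {q : ℝ} (hq0 : 0 < q) (hq1 : q < 1) :
    ∃ a, 0 < a ∧ Tendsto (eulerA q) atTop (𝓝 a) ∧ ∑' n : ℤ, (-q) ^ ((n ^ 2 : ℤ)) = a⁻¹ := by
  obtain ⟨C, hC⟩ := eulerA_bdd hq0 hq1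
  have hC0 : 0 < C := (eulerA_pos hq0 hq1 0).trans_le (hC 0)
  have h := tendsto_eulerA_inv hq0 hq1
  rw [← phi_eq hq0 hq1] at h
  have hpos : 0 < ∑' n : ℤ, (-q) ^ ((n ^ 2 : ℤ)) :=
    (inv_pos.2 hC0).trans_le <| ge_of_tendsto' h fun n =>
      inv_anti₀ (eulerA_pos hq0 hq1 n) (hC n)
  exact ⟨_, inv_pos.2 hpos, by simpa using h.inv₀ hpos.ne', (inv_inv _).symm⟩

theorem stmt_16 (q : ℝ) (hq0 : 0 < q) (hq1 : q < 1) :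
    (∑' n : ℤ, (-q) ^ ((n ^ 2 : ℤ))) ^ 3 / (∑' n : ℤ, (-(q ^ 3)) ^ ((n ^ 2 : ℤ)))
      = 1 - 6 * ∑' n : ℕ, q ^ (3 * n + 1) / (1 + q ^ (3 * n + 1))
        + 6 * ∑' n : ℕ, q ^ (3 * n + 2) / (1 + q ^ (3 * n + 2)) := by
  obtain ⟨a, ha0, ha, hφ⟩ := tendsto_eulerA hq0 hq1
  obtain ⟨b, hb0, hb, hφ3⟩ :=
    tendsto_eulerA (pow_pos hq0 3) (pow_lt_one₀ hq0.le hq1 three_ne_zero)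
  obtain ⟨s1, h1⟩ := lambert hq0 hq1 1 le_rfl
  obtain ⟨s2, h2⟩ := lambert hq0 hq1 2 one_le_two
  have hL : ∑' n : ℕ, (-1) ^ (n + 1) * (a * a)
      * (q ^ (n + 1) / (1 + q ^ (n + 1) + q ^ (2 * (n + 1))))
      = a * a * (∑' n : ℕ, q ^ (3 * n + 2) / (1 + q ^ (3 * n + 2))
        - ∑' n : ℕ, q ^ (3 * n + 1) / (1 + q ^ (3 * n + 1))) := by
    rw [h1, h2, ← s2.tsum_sub s1, ← tsum_mul_left]
    refine tsum_congr fun n => ?_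
    have d1 := (one_sub_pow_succ_pos hq0 hq1 (3 * n + 2)).ne'
    have d2 : 1 + q ^ (n + 1) + q ^ (2 * (n + 1)) ≠ 0 := by positivity
    have e2 : q ^ (2 * (n + 1)) = (q ^ (n + 1)) ^ 2 := by ring
    have e3 : q ^ (3 * (n + 1)) = (q ^ (n + 1)) ^ 3 := by ring
    rw [show 3 * n + 2 + 1 = 3 * (n + 1) by ring, e3] at d1
    rw [e2] at d2
    rw [one_mul, e2, e3, pow_succ (-1 : ℝ)]
    generalize q ^ (n + 1) = x at *
    field_simp
    ring
  have hlim := (hb.mul (ha.inv₀ ha0.ne')).congr fun N =>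
    ((prod_ratio hq0 hq1 N).symm.trans (finite_identity hq0 hq1 N))
  have heq := tendsto_nhds_unique hlim
    ((ha.pow 2).add ((tendsto_sum_limit hq0 hq1 ha).const_mul 6))
  rw [hL] at heq
  rw [hφ, hφ3]
  field_simp at heq ⊢
  linear_combination heq
end
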